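/- arXiv:1311.0137 — 2 statements merged into one kernel-verified Lean document; each statement's English description precedes it below -/
import Mathlib

section
/- Let H be a simple connected plane graph. Then there exists a simple plane graph H_Δ and an injection τ : V(H) → V(H_Δ) such that: (1) H_Δ is 3-connected and triangulated; (2) H is a subgraph of H_Δ via τ; (3) for every x, y ∈ V(H), wbw_{H_Δ}(τ(x), τ(y)) ≤ 4 · wbw_H(x, y); (4) every vertex of H_Δ is within wall-by-wall distance at most 4 from some vertex of τ(V(H)); and (5) for every non-negative integer λ, H^λ is a subgraph of H_Δ^{4λ}. -/
/-!
Definitions for wall-by-wall distance, λ-flat graphs and ξ-nearly planar graphs,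
following Grigoriev, Koutsonas and Thilikos, "Nearly Planar Graphs and λ-flat Graphs".

A plane graph is modelled combinatorially as a simple graph equipped with a rotation
system (a cyclic order of the edges incident to each vertex) that is planar, i.e.
satisfies Euler's formula (with faces counted as orbits of the face-tracing successor
on darts, corrected for isolated vertices and the number of connected components).

A graph embedding in the sphere (where edges may cross, but only at points that are
not vertices) is modelled topologically by a `Drawing`: an injective placement of the
vertices on the unit sphere of `ℝ³` together with, for each edge, a simple arc joining
the images of its endpoints whose interior avoids all vertices.
-/

namespace WBW

/-- The set of edges of `G` incident to the vertex `v`. -/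
def incidentSet {V : Type*} (G : SimpleGraph V) (v : V) : Set (Sym2 V) :=
  {e | e ∈ G.edgeSet ∧ v ∈ e}

/-- A simple graph together with a rotation system: for every vertex `v`, a
permutation of `Sym2 V` which fixes every non-incident edge and is a single cycle on
the set of edges incident to `v` (the cyclic order `σ_v` of the drawing). -/
structure RotationSystem (V : Type*) where
  G : SimpleGraph V
  rot : V → Equiv.Perm (Sym2 V)
  rot_cycleOn : ∀ v, (rot v).IsCycleOn (incidentSet G v)
  rot_fixed : ∀ v, ∀ e ∉ incidentSet G v, rot v e = e

variable {V : Type*}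

/-- The face-tracing successor on darts: the dart `(u,v)` is followed by the dart
leaving `v` along the edge succeeding `s(u,v)` in the cyclic order around `v`. -/
noncomputable def RotationSystem.faceNext (R : RotationSystem V) (d : R.G.Dart) :
    R.G.Dart :=
  have hmem : d.edge ∈ incidentSet R.G d.toProd.2 :=
    ⟨d.edge_mem, by rcases d with ⟨⟨a, b⟩, h⟩; simp [SimpleGraph.Dart.edge]⟩
  have hmem' : R.rot d.toProd.2 d.edge ∈ incidentSet R.G d.toProd.2 :=
    (R.rot_cycleOn d.toProd.2).1.mapsTo hmem
  ⟨(d.toProd.2, Sym2.Mem.other hmem'.2), by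
    have h := Sym2.other_spec hmem'.2
    have h2 : R.rot d.toProd.2 d.edge ∈ R.G.edgeSet := hmem'.1
    rw [← h] at h2
    exact h2⟩

/-- The number of faces of a rotation system: the number of orbits of the
face-tracing successor on darts. -/
noncomputable def RotationSystem.numFaces (R : RotationSystem V) : ℕ :=
  Nat.card (Quot (fun a b : R.G.Dart => R.faceNext a = b))

/-- A rotation system is plane (it is an embedding of the graph in the sphere without
crossings) iff it satisfies Euler's formula, componentwise; isolated vertices are
accounted for separately, since they carry no dart. -/
def RotationSystem.IsPlane (R : RotationSystem V) : Prop :=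
  Nat.card V + R.numFaces + Nat.card {v : V | ∀ w, ¬ R.G.Adj v w} =
    Nat.card R.G.edgeSet + 2 * Nat.card R.G.ConnectedComponent

/-- Two edges are attached if they share a vertex `v` and appear consecutively in the
cyclic order `σ_v` or its inverse. -/
def Attached (R : RotationSystem V) (e e' : Sym2 V) : Prop :=
  ∃ v : V, e ∈ incidentSet R.G v ∧ e' ∈ incidentSet R.G v ∧
    (R.rot v e = e' ∨ R.rot v e' = e)

/-- A wall-by-wall walk: a nonempty sequence of distinct edges of `R.G` in which
every two consecutive edges are attached. -/
def IsWbwWalk (R : RotationSystem V) (L : List (Sym2 V)) : Prop :=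
  L ≠ [] ∧ L.Nodup ∧ (∀ e ∈ L, e ∈ R.G.edgeSet) ∧ L.Chain' (Attached R)

/-- An `(x,y)`-wall-by-wall walk: a wall-by-wall walk whose first edge is incident to
`x` and whose last edge is incident to `y`. -/
def IsWbwWalkFromTo (R : RotationSystem V) (x y : V) (L : List (Sym2 V)) : Prop :=
  IsWbwWalk R L ∧ (∃ e, L.head? = some e ∧ x ∈ e) ∧ (∃ e, L.getLast? = some e ∧ y ∈ e)

/-- The wall-by-wall distance between `x` and `y`: the least number of edges of an
`(x,y)`-wall-by-wall walk (`⊤` if there is no such walk). -/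
noncomputable def wbwDist (R : RotationSystem V) (x y : V) : ℕ∞ :=
  sInf {n : ℕ∞ | ∃ L, IsWbwWalkFromTo R x y L ∧ (L.length : ℕ∞) = n}

/-- The `λ`-power of a plane graph: keep all edges and make adjacent all pairs of
vertices at wall-by-wall distance at most `λ`. -/
def RotationSystem.power (R : RotationSystem V) (l : ℕ) : SimpleGraph V :=
  R.G ⊔ SimpleGraph.fromRel (fun x y => wbwDist R x y ≤ (l : ℕ∞))

/-- `H` is a subgraph of `G` via the injection `τ`. -/
def SubgraphVia {U V : Type*} (H : SimpleGraph U) (G : SimpleGraph V) (τ : U → V) :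
    Prop :=
  Function.Injective τ ∧ ∀ x y, H.Adj x y → G.Adj (τ x) (τ y)

/-- A graph is `λ`-flat if it is a subgraph of the `λ`-power of some plane graph. -/
def IsFlat (l : ℕ) {V : Type*} (G : SimpleGraph V) : Prop :=
  ∃ (W : Type) (_ : Finite W) (R : RotationSystem W) (τ : V → W),
    R.IsPlane ∧ SubgraphVia G (R.power l) τ

/-- The unit sphere in `ℝ³`. -/
def unitSphere : Set (EuclideanSpace ℝ (Fin 3)) := Metric.sphere 0 1

/-- A drawing (embedding) of a graph in the sphere: vertices are placed injectively,
every edge is drawn as a simple arc joining the images of its two endpoints, and the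
interior of every arc avoids all vertex images (so edges may meet, away from their
endpoints, only at points that are not vertices). -/
structure Drawing {V : Type*} (G : SimpleGraph V) where
  vmap : V → unitSphere
  vmap_inj : Function.Injective vmap
  arc : Sym2 V → C(Set.Icc (0 : ℝ) 1, unitSphere)
  arc_inj : ∀ e ∈ G.edgeSet, Function.Injective (arc e)
  arc_ends : ∀ e ∈ G.edgeSet,
    Sym2.map vmap e =
      s(arc e ⟨0, Set.mem_Icc.mpr (by norm_num)⟩, arc e ⟨1, Set.mem_Icc.mpr (by norm_num)⟩)
  interior_avoids : ∀ e ∈ G.edgeSet, ∀ t : Set.Icc (0 : ℝ) 1,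
    (t : ℝ) ≠ 0 → (t : ℝ) ≠ 1 → arc e t ∉ Set.range vmap

/-- The crossings of the edge `e` in a drawing: pairs consisting of another edge `e'`
and a point, not a vertex, lying on the arcs of both `e` and `e'`. -/
def crossingSet {V : Type*} {G : SimpleGraph V} (D : Drawing G) (e : Sym2 V) :
    Set (Sym2 V × unitSphere) :=
  {q | q.1 ∈ G.edgeSet ∧ q.1 ≠ e ∧ q.2 ∈ Set.range (D.arc e) ∧
    q.2 ∈ Set.range (D.arc q.1) ∧ q.2 ∉ Set.range D.vmap}

/-- A graph is `ξ`-nearly planar if it has a drawing in the sphere in which every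
edge is crossed at most `ξ` times. -/
def IsNearlyPlanar (x : ℕ) {V : Type*} (G : SimpleGraph V) : Prop :=
  ∃ D : Drawing G, ∀ e ∈ G.edgeSet,
    (crossingSet D e).Finite ∧ (crossingSet D e).ncard ≤ x

/-- `λ(G)`: the least `λ` for which `G` is `λ`-flat. -/
noncomputable def flatNum {V : Type*} (G : SimpleGraph V) : ℕ :=
  sInf {l | IsFlat l G}

/-- `ξ(G)`: the least `ξ` for which `G` is `ξ`-nearly planar. -/
noncomputable def nearNum {V : Type*} (G : SimpleGraph V) : ℕ :=
  sInf {x | IsNearlyPlanar x G}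

/-- A graph is 3-connected if it has more than 3 vertices and removing any at most 2
vertices leaves it connected. -/
def ThreeConnected {V : Type*} (G : SimpleGraph V) : Prop :=
  3 < Nat.card V ∧ ∀ s : Set V, s.ncard ≤ 2 → (G.induce sᶜ).Connected

/-- A plane graph is triangulated if every face is bounded by a triangle, i.e. every
orbit of the face-tracing successor has length exactly 3. -/
def RotationSystem.Triangulated (R : RotationSystem V) : Prop :=
  ∀ d : R.G.Dart, R.faceNext (R.faceNext (R.faceNext d)) = d ∧ R.faceNext d ≠ d

/-- `H` is a topological minor of `G`: some subdivision of `H` is a subgraph of `G`,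
equivalently the branch vertices embed injectively into `G` and the edges of `H` are
realized by internally disjoint paths of `G` avoiding the branch vertices. -/
def IsTopMinor {U V : Type*} (H : SimpleGraph U) (G : SimpleGraph V) : Prop :=
  ∃ τ : U → V, Function.Injective τ ∧
    ∃ P : ∀ ⦃x y : U⦄, H.Adj x y → G.Walk (τ x) (τ y),
      (∀ ⦃x y : U⦄ (h : H.Adj x y), (P h).IsPath) ∧
      (∀ ⦃x y : U⦄ (h : H.Adj x y), ∀ v ∈ (P h).support,
        v ∈ Set.range τ → v = τ x ∨ v = τ y) ∧
      (∀ ⦃x y x' y' : U⦄ (h : H.Adj x y) (h' : H.Adj x' y'), s(x, y) ≠ s(x', y') →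
        ∀ v, v ∈ (P h).support → v ∈ (P h').support → v ∈ Set.range τ)

/-- `H` is a contraction of `G`: `H` is obtained from `G` by contracting edges,
equivalently there is a surjection `V(G) → V(H)` with connected fibres such that the
edges of `H` are exactly the pairs of distinct fibres joined by an edge of `G`. -/
def IsContractionOf {U V : Type*} (H : SimpleGraph U) (G : SimpleGraph V) : Prop :=
  ∃ f : V → U, Function.Surjective f ∧
    (∀ u : U, (G.induce (f ⁻¹' {u})).Connected) ∧
    (∀ a b : U, H.Adj a b ↔ a ≠ b ∧ ∃ x y, G.Adj x y ∧ f x = a ∧ f y = b)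

/-- The medial graph of a plane graph `G`: its vertices are the edges of `G`, two of
them being adjacent iff they are attached (this is the dual of the radial graph). -/
def medial (R : RotationSystem V) : SimpleGraph {e : Sym2 V // e ∈ R.G.edgeSet} :=
  SimpleGraph.fromRel (fun e f => Attached R e.1 f.1)

/-- The `(n × n)`-grid graph. -/
def gridGraph (n : ℕ) : SimpleGraph (Fin n × Fin n) :=
  SimpleGraph.fromRel (fun a b =>
    (a.1 = b.1 ∧ (a.2 : ℕ) + 1 = (b.2 : ℕ)) ∨ (a.2 = b.2 ∧ (a.1 : ℕ) + 1 = (b.1 : ℕ)))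

/-- The faces of a rotation system: orbits of the face-tracing successor on darts. -/
def RotationSystem.Face (R : RotationSystem V) : Type _ :=
  Quot (fun a b : R.G.Dart => R.faceNext a = b)

/-- The edge `e` lies on the boundary of the face `F`. -/
def EdgeOnFace (R : RotationSystem V) (e : Sym2 V) (F : R.Face) : Prop :=
  ∃ d : R.G.Dart, Quot.mk _ d = F ∧ d.edge = e

/-- A wall-by-wall walk passes through the face `F` if two consecutive edges of the
walk both lie on the boundary of `F`. -/
def WalkThroughFace (R : RotationSystem V) (L : List (Sym2 V)) (F : R.Face) : Prop :=
  ∃ (l₁ : List (Sym2 V)) (e₁ e₂ : Sym2 V) (l₂ : List (Sym2 V)),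
    L = l₁ ++ e₁ :: e₂ :: l₂ ∧ EdgeOnFace R e₁ F ∧ EdgeOnFace R e₂ F

end WBW

namespace TM
open Equiv

/-- A triangulated combinatorial map with vertex labels. -/
structure TriMap (D W : Type) where
  φ : Perm D
  α : Perm D
  αα : ∀ x, α (α x) = x
  φ3 : ∀ x, φ (φ (φ x)) = x
  p : D → W
  p_φ : ∀ x, p (φ x) = p (α x)
  same : ∀ x y, p x = p y → (φ * α).SameCycle x y
  ne : ∀ x, p x ≠ p (α x)
  inj : ∀ x y, p x = p y → p (α x) = p (α y) → x = y
  surj : ∀ w, ∃ x, p x = w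

namespace TriMap

variable {D W : Type} (M : TriMap D W)

/-- Vertex rotation. -/
def σ : Perm D := M.φ * M.α

lemma σ_apply (x : D) : M.σ x = M.φ (M.α x) := rfl

lemma p_σ (x : D) : M.p (M.σ x) = M.p x := by
  rw [σ_apply, M.p_φ, M.αα]

lemma p_σ_pow (n : ℕ) (x : D) : M.p ((M.σ ^ n) x) = M.p x := by
  induction n with
  | zero => rfl
  | succ n ih => rw [pow_succ', Perm.mul_apply, p_σ, ih]

lemma p_σ_symm (x : D) : M.p (M.σ.symm x) = M.p x := by
  rw [← M.p_σ (M.σ.symm x), Equiv.apply_symm_apply]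

/-- Underlying graph. -/
def graph : SimpleGraph W where
  Adj a b := ∃ x, M.p x = a ∧ M.p (M.α x) = b
  symm := ⟨by rintro a b ⟨x, rfl, rfl⟩; exact ⟨M.α x, rfl, by rw [M.αα]⟩⟩
  loopless := ⟨by rintro a ⟨x, rfl, h⟩; exact M.ne x h.symm⟩

lemma adj_dart (x : D) : M.graph.Adj (M.p x) (M.p (M.α x)) := ⟨x, rfl, rfl⟩

/-- The edge of a dart. -/
def edge (x : D) : Sym2 W := s(M.p x, M.p (M.α x))

lemma edge_α (x : D) : M.edge (M.α x) = M.edge x := by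
  unfold edge; rw [M.αα, Sym2.eq_swap]

lemma edge_mem (x : D) : M.edge x ∈ M.graph.edgeSet := M.adj_dart x

lemma edge_inj {x y : D} (h : M.p x = M.p y) (he : M.edge x = M.edge y) : x = y := by
  unfold edge at he
  rw [h] at he
  exact M.inj x y h (Sym2.congr_right.mp he)

lemma edge_inc (x : D) : M.edge x ∈ WBW.incidentSet M.graph (M.p x) :=
  ⟨M.edge_mem x, by simp [edge]⟩

lemma exists_of_inc {w : W} {e : Sym2 W} (h : e ∈ WBW.incidentSet M.graph w) :
    ∃ x, M.p x = w ∧ M.edge x = e := by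
  obtain ⟨h1, h2⟩ := h
  obtain ⟨b, rfl⟩ := h2
  obtain ⟨x, hx, hy⟩ := (SimpleGraph.mem_edgeSet _).mp h1
  exact ⟨x, hx, by rw [edge, hx, hy]⟩

/-- Darts at a vertex versus incident edges. -/
noncomputable def incEquiv (w : W) :
    {x : D // M.p x = w} ≃ {e // e ∈ WBW.incidentSet M.graph w} :=
  Equiv.ofBijective (fun x => ⟨M.edge x.1, by have := M.edge_inc x.1; rwa [x.2] at this⟩)
    ⟨by
      rintro ⟨x, hx⟩ ⟨y, hy⟩ h
      exact Subtype.ext (M.edge_inj (hx.trans hy.symm) (congrArg Subtype.val h)),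
     by
      rintro ⟨e, he⟩
      obtain ⟨x, hx, hxe⟩ := M.exists_of_inc he
      exact ⟨⟨x, hx⟩, Subtype.ext hxe⟩⟩

open Classical in
/-- Rotation at a vertex. -/
noncomputable def rot (w : W) : Perm (Sym2 W) :=
  Perm.extendDomain (M.σ.subtypePerm (p := fun x => M.p x = w) (fun x => by rw [p_σ]))
    (M.incEquiv w)

lemma rot_edge' (w : W) (x : D) (h : M.p x = w) : M.rot w (M.edge x) = M.edge (M.σ x) := by
  classical
  exact Perm.extendDomain_apply_image
    (M.σ.subtypePerm (p := fun x => M.p x = w) (fun x => by rw [p_σ])) (M.incEquiv w) ⟨x, h⟩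

lemma rot_edge (x : D) : M.rot (M.p x) (M.edge x) = M.edge (M.σ x) := M.rot_edge' _ x rfl

lemma rot_pow (w : W) (x : D) (h : M.p x = w) (n : ℕ) :
    (M.rot w ^ n) (M.edge x) = M.edge ((M.σ ^ n) x) := by
  induction n with
  | zero => rfl
  | succ n ih =>
    rw [pow_succ', Perm.mul_apply, ih, rot_edge' _ _ _ (by rw [p_σ_pow, h]), pow_succ',
      Perm.mul_apply]

lemma exists_pow [Finite D] (x y : D) (h : M.p x = M.p y) : ∃ n : ℕ, (M.σ ^ n) x = y := by
  obtain ⟨n, -, hn⟩ := (M.same x y h).exists_pow_eq'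
  exact ⟨n, hn⟩

/-- The rotation system. -/
noncomputable def rs [Finite D] : WBW.RotationSystem W where
  G := M.graph
  rot := M.rot
  rot_cycleOn := by
    intro w
    refine ⟨⟨?_, (M.rot w).injective.injOn, ?_⟩, ?_⟩
    · intro e he
      obtain ⟨x, rfl, rfl⟩ := M.exists_of_inc he
      rw [rot_edge]
      have := M.edge_inc (M.σ x)
      rwa [p_σ] at this
    · intro e he
      obtain ⟨x, rfl, rfl⟩ := M.exists_of_inc he
      refine ⟨M.edge (M.σ.symm x), ?_, ?_⟩
      · have := M.edge_inc (M.σ.symm x)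
        rwa [p_σ_symm] at this
      · rw [rot_edge' _ _ _ (M.p_σ_symm x), Equiv.apply_symm_apply]
    · intro e he e' he'
      obtain ⟨x, rfl, rfl⟩ := M.exists_of_inc he
      obtain ⟨y, hy, rfl⟩ := M.exists_of_inc he'
      obtain ⟨n, rfl⟩ := M.exists_pow x y hy.symm
      exact ⟨n, by rw [zpow_natCast, rot_pow _ _ _ rfl]⟩
  rot_fixed := by
    classical
    intro w e he
    exact Perm.extendDomain_apply_not_subtype _ _ he

variable [Finite D]

lemma faceNext_fst {V : Type} (R : WBW.RotationSystem V) (d : R.G.Dart) :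
    (R.faceNext d).fst = d.snd := rfl

lemma faceNext_edge {V : Type} (R : WBW.RotationSystem V) (d : R.G.Dart) :
    (R.faceNext d).edge = R.rot d.snd d.edge := by
  unfold WBW.RotationSystem.faceNext
  exact Sym2.other_spec _

lemma dart_ext {V : Type} {G : SimpleGraph V} {d d' : G.Dart} (h : d.fst = d'.fst)
    (he : d.edge = d'.edge) : d = d' := by
  obtain ⟨⟨a, b⟩, hd⟩ := d
  obtain ⟨⟨a', b'⟩, hd'⟩ := d'
  simp only at h
  subst h
  have : s(a, b) = s(a, b') := he
  rw [Sym2.congr_right] at this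
  subst this
  rfl

/-- Darts. -/
noncomputable def dartEquiv : D ≃ M.rs.G.Dart :=
  Equiv.ofBijective (fun x => ⟨(M.p x, M.p (M.α x)), M.adj_dart x⟩)
    ⟨by
      intro x y h
      have h1 := congrArg (fun d : M.rs.G.Dart => d.fst) h
      have h2 := congrArg (fun d : M.rs.G.Dart => d.snd) h
      exact M.inj x y h1 h2,
     by
      rintro ⟨⟨a, b⟩, h⟩
      obtain ⟨x, hx, hy⟩ := h
      refine ⟨x, ?_⟩
      simp only at hx hy
      subst hx hy
      rfl⟩

lemma faceNext_dartEquiv (x : D) : M.rs.faceNext (M.dartEquiv x) = M.dartEquiv (M.φ x) := by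
  apply dart_ext
  · rw [faceNext_fst]; exact (M.p_φ x).symm
  · rw [faceNext_edge]
    change M.rot (M.p (M.α x)) (M.edge x) = M.edge (M.φ x)
    rw [← M.edge_α x, rot_edge, σ_apply, M.αα]

lemma φ_ne (x : D) : M.φ x ≠ x := fun h => M.ne x (by rw [← M.p_φ, h])

lemma triangulated : M.rs.Triangulated := by
  intro d
  obtain ⟨x, rfl⟩ := M.dartEquiv.surjective d
  simp only [faceNext_dartEquiv, M.φ3, true_and]
  exact fun h => M.φ_ne x (M.dartEquiv.injective h)

lemma card_orbits : Nat.card D = 3 * Nat.card (Quot (fun a b : D => M.φ a = b)) := by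
  have hfin : Finite (Quot (fun a b : D => M.φ a = b)) := Quot.finite _
  have key : ∀ q : Quot (fun a b : D => M.φ a = b),
      Nat.card {x : D // Quot.mk _ x = q} = 3 := by
    intro q
    obtain ⟨a, rfl⟩ := Quot.exists_rep q
    have h1 : ∀ x y, Relation.EqvGen (fun a b : D => M.φ a = b) x y →
        (y = x ∨ y = M.φ x ∨ y = M.φ (M.φ x)) := by
      intro x y h
      induction h with
      | rel x y h => exact Or.inr (Or.inl h.symm)
      | refl x => exact Or.inl rfl
      | symm x y _ ih => rcases ih with rfl | rfl | rfl <;> simp [M.φ3]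
      | trans x y z _ _ ih1 ih2 =>
        rcases ih1 with rfl | rfl | rfl <;> rcases ih2 with rfl | rfl | rfl <;> simp [M.φ3]
    have hs : {x : D | Quot.mk (fun a b : D => M.φ a = b) x = Quot.mk _ a}
        = {a, M.φ a, M.φ (M.φ a)} := by
      ext x
      simp only [Set.mem_setOf_eq, Set.mem_insert_iff, Set.mem_singleton_iff]
      constructor
      · intro h; exact h1 a x (Quot.eqvGen_exact h.symm)
      · have e1 : ∀ y, Quot.mk (fun a b : D => M.φ a = b) (M.φ y) = Quot.mk _ y :=
          fun y => (Quot.sound (r := fun a b : D => M.φ a = b) (a := y) (b := M.φ y) rfl).symm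
        rintro (rfl | rfl | rfl)
        · rfl
        · exact e1 _
        · rw [e1, e1]
    change Nat.card ({x : D | Quot.mk (fun a b : D => M.φ a = b) x = Quot.mk _ a} : Set D) = 3
    rw [hs, Nat.card_coe_set_eq, Set.ncard_eq_three]
    refine ⟨_, _, _, (M.φ_ne a).symm, ?_, (M.φ_ne _).symm, rfl⟩
    intro h
    apply M.φ_ne a
    have := congrArg M.φ h
    rwa [M.φ3] at this
  have := Nat.card_congr (Equiv.sigmaFiberEquiv (Quot.mk (fun a b : D => M.φ a = b)))
  rw [← this]
  have := Fintype.ofFinite (Quot (fun a b : D => M.φ a = b))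
  rw [Nat.card_sigma, Finset.sum_congr rfl (fun q _ => key q)]
  simp [mul_comm]

lemma numFaces : Nat.card D = 3 * M.rs.numFaces := by
  rw [M.card_orbits]
  congr 1
  refine Nat.card_congr (Quot.congr M.dartEquiv ?_)
  intro a b
  rw [faceNext_dartEquiv, M.dartEquiv.injective.eq_iff]

lemma card_darts {V : Type} [Finite V] (G : SimpleGraph V) :
    Nat.card G.Dart = 2 * Nat.card G.edgeSet := by
  classical
  have := Fintype.ofFinite V
  have := G.dart_card_eq_twice_card_edges
  rw [Nat.card_eq_fintype_card, Nat.card_eq_fintype_card, this, SimpleGraph.edgeFinset_card]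

lemma isPlane [Finite W] (hc : M.graph.Connected) (hE : 6 * Nat.card W = Nat.card D + 12) :
    M.rs.IsPlane := by
  unfold WBW.RotationSystem.IsPlane
  have h1 := M.numFaces
  have h2 := card_darts M.rs.G
  rw [← Nat.card_congr M.dartEquiv] at h2
  have h3 : Nat.card {v : W | ∀ w, ¬ M.rs.G.Adj v w} = 0 := by
    rw [Nat.card_coe_set_eq, Set.ncard_eq_zero]
    ext v
    simp only [Set.mem_setOf_eq, Set.mem_empty_iff_false, iff_false, not_forall, not_not]
    obtain ⟨x, rfl⟩ := M.surj v
    exact ⟨_, M.adj_dart x⟩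
  have h4 : Nat.card M.rs.G.ConnectedComponent = 1 := by
    have := hc.nonempty
    have : Subsingleton M.rs.G.ConnectedComponent :=
      hc.preconnected.subsingleton_connectedComponent
    have : Nonempty M.rs.G.ConnectedComponent := ⟨M.rs.G.connectedComponentMk hc.nonempty.some⟩
    exact Nat.card_of_subsingleton this.some
  rw [h3, h4]
  omega

/-- Common neighbour. -/
lemma link (x : D) : ∃ y, M.p y = M.p (M.α (M.σ x)) ∧ M.p (M.α y) = M.p (M.α x) := by
  refine ⟨M.φ (M.σ x), M.p_φ _, ?_⟩
  rw [← M.p_φ, σ_apply, M.φ3]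

lemma threeConnected [Finite W] (hc : M.graph.Connected) (hcard : 3 < Nat.card W) :
    WBW.ThreeConnected M.graph := by
  classical
  refine ⟨hcard, ?_⟩
  intro s hs
  have hne : ∃ v, v ∉ s := by
    by_contra h
    push Not at h
    have : s = Set.univ := Set.eq_univ_of_forall h
    rw [this, Set.ncard_univ] at hs
    omega
  obtain ⟨v0, hv0⟩ := hne
  -- colour = reachable from v0
  let col : W → Prop := fun w => ∃ h : w ∉ s, (M.graph.induce sᶜ).Reachable ⟨v0, hv0⟩ ⟨w, h⟩
  have hcol : ∀ x, M.p x ∉ s → M.p (M.α x) ∉ s → (col (M.p x) ↔ col (M.p (M.α x))) := by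
    intro x h1 h2
    have hadj : (M.graph.induce sᶜ).Adj ⟨M.p x, h1⟩ ⟨M.p (M.α x), h2⟩ := M.adj_dart x
    constructor
    · rintro ⟨_, h⟩; exact ⟨h2, h.trans hadj.reachable⟩
    · rintro ⟨_, h⟩; exact ⟨h1, h.trans hadj.symm.reachable⟩
  have hpair : ∀ a ∈ s, ∃ b, s ⊆ {a, b} := by
    intro a ha
    have h1 : (s \ {a}).ncard ≤ 1 := by
      rw [Set.ncard_diff_singleton_of_mem ha]; omega
    rw [Set.ncard_le_one_iff_eq] at h1
    rcases h1 with h | ⟨b, h⟩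
    · refine ⟨a, fun z hz => ?_⟩
      by_cases hza : z = a
      · simp [hza]
      · have : z ∈ s \ {a} := ⟨hz, hza⟩
        rw [h] at this; exact this.elim
    · refine ⟨b, fun z hz => ?_⟩
      by_cases hza : z = a
      · simp [hza]
      · have : z ∈ s \ {a} := ⟨hz, hza⟩
        rw [h] at this
        simp only [Set.mem_singleton_iff] at this
        simp [this]
  -- common neighbour outside s
  have hcommon : ∀ x, M.p x ∈ s → M.p (M.α x) ∈ s → M.p (M.α (M.σ x)) ∉ s := by
    intro x h1 h2 h3
    obtain ⟨b, hb⟩ := hpair _ h1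
    have n1 := M.ne x
    have n2 := M.ne (M.σ x)
    rw [p_σ] at n2
    obtain ⟨y, hy1, hy2⟩ := M.link x
    have n3 := M.ne y
    rw [hy1, hy2] at n3
    have e2 := hb h2
    have e3 := hb h3
    simp only [Set.mem_insert_iff, Set.mem_singleton_iff] at e2 e3
    rcases e2 with e2 | e2
    · exact n1 e2.symm
    · rcases e3 with e3 | e3
      · exact n2 e3.symm
      · exact n3 (e3.trans e2.symm)
  -- one colour around each vertex of s
  have haround : ∀ a ∈ s, ∃ c : Prop, ∀ x, M.p x = a → M.p (M.α x) ∉ s →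
      (col (M.p (M.α x)) ↔ c) := by
    intro a ha
    obtain ⟨b, hb⟩ := hpair a ha
    have hstart : ∃ y0, M.p y0 = a ∧ M.p (M.α y0) ∉ s ∧
        ∀ y, M.p y = a → M.p (M.α y) ∈ s → M.σ y = y0 := by
      by_cases hx : ∃ x, M.p x = a ∧ M.p (M.α x) ∈ s
      · obtain ⟨x, hx1, hx2⟩ := hx
        refine ⟨M.σ x, by rw [p_σ, hx1], hcommon x (hx1 ▸ ha) hx2, ?_⟩
        intro y hy1 hy2
        congr 1
        apply M.inj y x (hy1.trans hx1.symm)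
        have e1 := hb hx2
        have e2 := hb hy2
        simp only [Set.mem_insert_iff, Set.mem_singleton_iff] at e1 e2
        have n1 := M.ne x
        have n2 := M.ne y
        rw [hx1] at n1
        rw [hy1] at n2
        rcases e1 with e1 | e1
        · exact absurd e1.symm n1
        rcases e2 with e2 | e2
        · exact absurd e2.symm n2
        rw [e1, e2]
      · push Not at hx
        obtain ⟨x, hx1⟩ := M.surj a
        exact ⟨x, hx1, hx x hx1, fun y h1 h2 => absurd h2 (hx y h1)⟩
    obtain ⟨y0, hy0, hy0s, hy⟩ := hstart
    refine ⟨col (M.p (M.α y0)), ?_⟩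
    have hn : ∀ n : ℕ, M.p (M.α ((M.σ ^ n) y0)) ∈ s ∨
        (col (M.p (M.α ((M.σ ^ n) y0))) ↔ col (M.p (M.α y0))) := by
      intro n
      induction n with
      | zero => right; rfl
      | succ n ih =>
        rw [pow_succ', Perm.mul_apply]
        set z := (M.σ ^ n) y0 with hz
        have hpz : M.p z = a := by rw [hz, p_σ_pow, hy0]
        by_cases h1 : M.p (M.α z) ∈ s
        · right; rw [hy z hpz h1]
        · by_cases h2 : M.p (M.α (M.σ z)) ∈ s
          · exact Or.inl h2
          · right
            rcases ih with ih | ih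
            · exact absurd ih h1
            · rw [← ih]
              obtain ⟨y, e1, e2⟩ := M.link z
              have := hcol y (by rwa [e1]) (by rwa [e2])
              rwa [e1, e2] at this
    intro x hx1 hx2
    obtain ⟨n, rfl⟩ := M.exists_pow y0 x (hy0.trans hx1.symm)
    exact (hn n).resolve_left hx2
  choose! cc hcc using haround
  let ψ : W → Prop := fun w => if w ∈ s then cc w else col w
  have hψ : ∀ u v, M.graph.Adj u v → (ψ u ↔ ψ v) := by
    rintro _ _ ⟨x, rfl, rfl⟩
    by_cases h1 : M.p x ∈ s <;> by_cases h2 : M.p (M.α x) ∈ s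
    · simp only [ψ, h1, h2, if_true]
      have h3 := hcommon x h1 h2
      have e1 := hcc _ h1 (M.σ x) (M.p_σ x) h3
      obtain ⟨y, hy1, hy2⟩ := M.link x
      have e2 := hcc _ h2 (M.α y) hy2 (by rw [M.αα, hy1]; exact h3)
      rw [M.αα, hy1] at e2
      rw [← e1, ← e2]
    · simp only [ψ, h1, h2, if_true, if_false]
      exact (hcc _ h1 x rfl h2).symm
    · simp only [ψ, h1, h2, if_true, if_false]
      have := hcc _ h2 (M.α x) rfl (by rwa [M.αα])
      rwa [M.αα] at this
    · simp only [ψ, h1, h2, if_false]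
      exact hcol x h1 h2
  have hψw : ∀ u v, M.graph.Walk u v → (ψ u ↔ ψ v) := by
    intro u v w
    induction w with
    | nil => rfl
    | cons h _ ih => exact (hψ _ _ h).trans ih
  have : Nonempty (sᶜ : Set W) := ⟨⟨v0, hv0⟩⟩
  rw [SimpleGraph.connected_iff_exists_forall_reachable]
  refine ⟨⟨v0, hv0⟩, ?_⟩
  rintro ⟨w, hw⟩
  have hw' : w ∉ s := hw
  obtain ⟨wk⟩ := hc.preconnected v0 w
  have := hψw v0 w wk
  simp only [ψ, hv0, hw', if_false] at this
  obtain ⟨_, h⟩ := this.mp ⟨hv0, SimpleGraph.Reachable.refl _⟩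
  exact h

end TriMap

/-- Attachment as a graph. -/
def attG {W : Type} (S : WBW.RotationSystem W) : SimpleGraph (Sym2 W) :=
  SimpleGraph.fromRel (WBW.Attached S)

lemma attached_symm {W : Type} {S : WBW.RotationSystem W} {e e' : Sym2 W}
    (h : WBW.Attached S e e') : WBW.Attached S e' e := by
  obtain ⟨v, h1, h2, h3⟩ := h
  exact ⟨v, h2, h1, h3.symm⟩

lemma attG_adj {W : Type} {S : WBW.RotationSystem W} {e e' : Sym2 W}
    (h : (attG S).Adj e e') : WBW.Attached S e e' := by
  rw [attG, SimpleGraph.fromRel_adj] at h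
  rcases h.2 with h | h
  · exact h
  · exact attached_symm h

/-- reachable by at most n steps -/
def Within {W : Type} (S : WBW.RotationSystem W) (n : ℕ) (e e' : Sym2 W) : Prop :=
  ∃ w : (attG S).Walk e e', w.length ≤ n

lemma Within.refl {W : Type} (S : WBW.RotationSystem W) (n : ℕ) (e : Sym2 W) :
    Within S n e e := ⟨SimpleGraph.Walk.nil, by simp⟩

lemma Within.symm {W : Type} {S : WBW.RotationSystem W} {n : ℕ} {e e' : Sym2 W}
    (h : Within S n e e') : Within S n e' e := by
  obtain ⟨w, hw⟩ := h
  exact ⟨w.reverse, by simpa using hw⟩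

lemma Within.trans {W : Type} {S : WBW.RotationSystem W} {n m : ℕ} {e e' e'' : Sym2 W}
    (h : Within S n e e') (h' : Within S m e' e'') : Within S (n + m) e e'' := by
  obtain ⟨w, hw⟩ := h
  obtain ⟨w', hw'⟩ := h'
  exact ⟨w.append w', by rw [SimpleGraph.Walk.length_append]; omega⟩

lemma Within.of_attached {W : Type} {S : WBW.RotationSystem W} {e e' : Sym2 W}
    (h : WBW.Attached S e e') : Within S 1 e e' := by
  by_cases he : e = e'
  · subst he; exact Within.refl _ _ _
  · have : (attG S).Adj e e' := by
      rw [attG, SimpleGraph.fromRel_adj]; exact ⟨he, Or.inl h⟩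
    exact ⟨this.toWalk, by simp⟩

lemma Within.dist {W : Type} {S : WBW.RotationSystem W} {n : ℕ} {e e' : Sym2 W}
    (h : Within S n e e') (he : e ∈ S.G.edgeSet) {x y : W} (hx : x ∈ e) (hy : y ∈ e') :
    WBW.wbwDist S x y ≤ ((n + 1 : ℕ) : ℕ∞) := by
  classical
  obtain ⟨w, hw⟩ := h
  have hb := w.length_bypass_le
  have hmem : ∀ {e e' : Sym2 W} (w : (attG S).Walk e e'), e ∈ S.G.edgeSet →
      ∀ f ∈ w.support, f ∈ S.G.edgeSet := by
    intro e e' w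
    induction w with
    | nil => intro h f hf; simp at hf; rwa [hf]
    | cons h p ih =>
      intro h0 f hf
      rw [SimpleGraph.Walk.support_cons, List.mem_cons] at hf
      rcases hf with rfl | hf
      · exact h0
      · obtain ⟨v, h1, h2, -⟩ := attG_adj h
        exact ih h2.1 f hf
  have hL : WBW.IsWbwWalkFromTo S x y w.bypass.support := by
    refine ⟨⟨by simp, w.bypass_isPath.support_nodup, hmem _ he, ?_⟩, ⟨e, ?_, hx⟩, ⟨e', ?_, hy⟩⟩
    · exact (SimpleGraph.Walk.isChain_adj_support _).imp (fun a b h => attG_adj h)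
    · rw [List.head?_eq_some_head (by simp), SimpleGraph.Walk.head_support]
    · rw [List.getLast?_eq_some_getLast (by simp), SimpleGraph.Walk.getLast_support]
  calc WBW.wbwDist S x y ≤ (w.bypass.support.length : ℕ∞) := sInf_le ⟨_, hL, rfl⟩
    _ ≤ _ := by
      rw [SimpleGraph.Walk.length_support]
      exact_mod_cast (by omega)

lemma TriMap.within_σ {D W : Type} [Finite D] (M : TriMap D W) (x : D) :
    Within M.rs 1 (M.edge x) (M.edge (M.σ x)) := by
  apply Within.of_attached
  refine ⟨M.p x, M.edge_inc x, ?_, Or.inl (M.rot_edge x)⟩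
  have := M.edge_inc (M.σ x)
  rwa [M.p_σ] at this

/-- Tetrahedron involution. -/
def k4α : Fin 4 × Fin 3 → Fin 4 × Fin 3 := fun x =>
  (![![(1, 2), (3, 2), (2, 0)], ![(2, 2), (3, 0), (0, 0)], ![(0, 2), (3, 1), (1, 0)],
    ![(1, 1), (2, 1), (0, 1)]] : Fin 4 → Fin 3 → Fin 4 × Fin 3) x.1 x.2

/-- Tetrahedron vertices. -/
def k4p : Fin 4 × Fin 3 → Fin 4 := fun x =>
  (![![0, 1, 3], ![0, 2, 1], ![0, 3, 2], ![1, 2, 3]] : Fin 4 → Fin 3 → Fin 4) x.1 x.2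

/-- Tetrahedron. -/
def k4 : TriMap (Fin 4 × Fin 3) (Fin 4) where
  φ := ⟨fun x => (x.1, x.2 + 1), fun x => (x.1, x.2 + 2), by decide, by decide⟩
  α := ⟨k4α, k4α, by decide, by decide⟩
  αα := by decide
  φ3 := by decide
  p := k4p
  p_φ := by decide
  same := by
    intro x y h
    have key : ∀ x y, k4p x = k4p y →
        y = x ∨ y = ((k4α x).1, (k4α x).2 + 1) ∨
        y = ((k4α ((k4α x).1, (k4α x).2 + 1)).1, (k4α ((k4α x).1, (k4α x).2 + 1)).2 + 1) := by
      decide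
    rcases key x y h with rfl | rfl | rfl
    · exact Perm.SameCycle.refl _ _
    · exact ⟨1, rfl⟩
    · exact ⟨2, rfl⟩
  ne := by decide
  inj := by decide
  surj := by decide

lemma k4_adj {a b : Fin 4} (h : a ≠ b) : k4.graph.Adj a b := by
  have : ∀ a b, a ≠ b → ∃ x, k4p x = a ∧ k4p (k4α x) = b := by decide
  exact this a b h

lemma k4_conn : k4.graph.Connected := by
  rw [SimpleGraph.connected_iff_exists_forall_reachable]
  refine ⟨0, fun w => ?_⟩
  by_cases h : (0 : Fin 4) = w
  · rw [h]
  · exact (k4_adj h).reachable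

lemma k4_dist (a b : Fin 4) : WBW.wbwDist k4.rs a b ≤ 1 := by
  have : ∃ x, a ∈ k4.edge x ∧ b ∈ k4.edge x := by
    by_cases h : a = b
    · subst h
      obtain ⟨x, rfl⟩ := k4.surj a
      exact ⟨x, by simp [TriMap.edge], by simp [TriMap.edge]⟩
    · obtain ⟨x, rfl, rfl⟩ := k4_adj h
      exact ⟨x, by simp [TriMap.edge], by simp [TriMap.edge]⟩
  obtain ⟨x, h1, h2⟩ := this
  simpa using (Within.refl k4.rs 0 (k4.edge x)).dist (k4.edge_mem x) h1 h2

lemma one_le_dist {V : Type} (R : WBW.RotationSystem V) (x y : V) : 1 ≤ WBW.wbwDist R x y := by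
  apply le_sInf
  rintro n ⟨L, ⟨⟨h, -⟩, -⟩, rfl⟩
  exact_mod_cast List.length_pos_iff.mpr h

/-- Connected combinatorial map of a simple graph with no digon face. -/
structure CM (D V F : Type) where
  nx : Perm D
  rv : D → D
  rr : ∀ d, rv (rv d) = d
  tail : D → V
  face : D → F
  tail_nx : ∀ d, tail (nx d) = tail (rv d)
  face_nx : ∀ d, face (nx d) = face d
  vsame : ∀ x y, tail x = tail y → ∃ n : ℕ, (fun d => nx (rv d))^[n] x = y
  fsame : ∀ x y, face x = face y → nx.SameCycle x y
  ne : ∀ d, tail d ≠ tail (rv d)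
  inj : ∀ x y, tail x = tail y → tail (rv x) = tail (rv y) → x = y
  nn : ∀ d, nx (nx d) ≠ d
  vsurj : ∀ v, ∃ d, tail d = v
  fsurj : ∀ f, ∃ d, face d = f

/-- The nine new darts per old dart. -/
inductive K where
  | A0 | A1 | A2 | B0 | B1 | B2 | C0 | C1 | C2

/-- Counting. -/
def kEquiv : K ≃ Fin 9 where
  toFun
    | .A0 => 0 | .A1 => 1 | .A2 => 2 | .B0 => 3 | .B1 => 4 | .B2 => 5 | .C0 => 6 | .C1 => 7
    | .C2 => 8
  invFun := ![.A0, .A1, .A2, .B0, .B1, .B2, .C0, .C1, .C2]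
  left_inv := by intro k; cases k <;> rfl
  right_inv := by decide

instance : Finite K := Finite.of_equiv _ kEquiv.symm

lemma card_K : Nat.card K = 9 := by rw [Nat.card_congr kEquiv]; simp

/-- Rotation inside a triangle. -/
def kφ : K → K
  | .A0 => .A1 | .A1 => .A2 | .A2 => .A0
  | .B0 => .B1 | .B1 => .B2 | .B2 => .B0
  | .C0 => .C1 | .C1 => .C2 | .C2 => .C0

lemma kφ3 (k : K) : kφ (kφ (kφ k)) = k := by cases k <;> rfl

namespace CM
variable {D V F : Type} (C : CM D V F)

/-- Face permutation. -/
def φ : Perm (D × K) where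
  toFun x := (x.1, kφ x.2)
  invFun x := (x.1, kφ (kφ x.2))
  left_inv := by rintro ⟨d, k⟩; simp [kφ3]
  right_inv := by rintro ⟨d, k⟩; simp [kφ3]

/-- Dart reversal. -/
def αf : D × K → D × K
  | (d, .A0) => (C.rv d, .A0)
  | (d, .A1) => (d, .B0)
  | (d, .B0) => (d, .A1)
  | (d, .B1) => (C.nx d, .A2)
  | (d, .A2) => (C.nx.symm d, .B1)
  | (d, .B2) => (d, .C0)
  | (d, .C0) => (d, .B2)
  | (d, .C1) => (C.nx d, .C2)
  | (d, .C2) => (C.nx.symm d, .C1)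

lemma αf_inv (x : D × K) : C.αf (C.αf x) = x := by
  obtain ⟨d, k⟩ := x
  cases k <;> simp [αf, C.rr]

/-- Dart reversal as a permutation. -/
def α : Perm (D × K) := ⟨C.αf, C.αf, C.αf_inv, C.αf_inv⟩

/-- Start vertex. -/
def p : D × K → V ⊕ D ⊕ F
  | (d, .A0) => .inl (C.tail d)
  | (d, .A1) => .inl (C.tail (C.rv d))
  | (d, .A2) => .inr (.inl d)
  | (d, .B0) => .inr (.inl d)
  | (d, .B1) => .inl (C.tail (C.rv d))
  | (d, .B2) => .inr (.inl (C.nx d))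
  | (d, .C0) => .inr (.inl d)
  | (d, .C1) => .inr (.inl (C.nx d))
  | (d, .C2) => .inr (.inr (C.face d))

lemma tail_symm (d : D) : C.tail (C.rv (C.nx.symm d)) = C.tail d := by
  rw [← C.tail_nx, Equiv.apply_symm_apply]

lemma face_symm (d : D) : C.face (C.nx.symm d) = C.face d := by
  rw [← C.face_nx, Equiv.apply_symm_apply]

lemma step (x : D × K) : (φ * C.α).SameCycle x (φ (C.αf x)) := ⟨1, rfl⟩

lemma sA1 (d : D) : (φ * C.α).SameCycle (d, .A1) (C.nx d, .A0) :=
  (C.step (d, .A1)).trans (C.step (d, .B1))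

lemma sB1 (d : D) : (φ * C.α).SameCycle (d, .B1) (C.nx d, .A0) := C.step (d, .B1)

lemma sA0 (d : D) : (φ * C.α).SameCycle (d, .A0) (C.nx (C.rv d), .A0) :=
  (C.step (d, .A0)).trans (C.sA1 (C.rv d))

lemma sA (x y : D) (h : C.tail x = C.tail y) : (φ * C.α).SameCycle (x, .A0) (y, .A0) := by
  obtain ⟨n, rfl⟩ := C.vsame x y h
  clear h
  induction n with
  | zero => exact Perm.SameCycle.refl _ _
  | succ n ih => rw [Function.iterate_succ_apply']; exact ih.trans (C.sA0 _)

lemma sB0 (d : D) : (φ * C.α).SameCycle (d, .B0) (d, .A2) := C.step (d, .B0)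

lemma sC0 (d : D) : (φ * C.α).SameCycle (d, .C0) (d, .A2) := (C.step (d, .C0)).trans (C.sB0 d)

lemma sC1 (d : D) : (φ * C.α).SameCycle (d, .C1) (C.nx d, .A2) :=
  (C.step (d, .C1)).trans (C.sC0 _)

lemma sB2 (d : D) : (φ * C.α).SameCycle (d, .B2) (C.nx d, .A2) :=
  (C.step (d, .B2)).trans (C.sC1 _)

lemma sC2 (d : D) : (φ * C.α).SameCycle (C.nx d, .C2) (d, .C2) := by
  have := C.step (C.nx d, .C2)
  simpa [αf, φ, kφ] using this

lemma sC_pow (n : ℕ) (d : D) : (φ * C.α).SameCycle ((C.nx ^ n) d, .C2) (d, .C2) := by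
  induction n with
  | zero => exact Perm.SameCycle.refl _ _
  | succ n ih => rw [pow_succ', Perm.mul_apply]; exact (C.sC2 _).trans ih

lemma sC [Finite D] (x y : D) (h : C.face x = C.face y) :
    (φ * C.α).SameCycle (x, .C2) (y, .C2) := by
  obtain ⟨n, -, rfl⟩ := (C.fsame x y h).exists_pow_eq'
  exact (C.sC_pow n x).symm

lemma canon (x : D × K) :
    (∃ d, (φ * C.α).SameCycle x (d, .A0) ∧ C.p x = .inl (C.tail d)) ∨
    (∃ d, (φ * C.α).SameCycle x (d, .A2) ∧ C.p x = .inr (.inl d)) ∨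
    (∃ d, (φ * C.α).SameCycle x (d, .C2) ∧ C.p x = .inr (.inr (C.face d))) := by
  obtain ⟨d, k⟩ := x
  cases k
  · exact Or.inl ⟨d, Perm.SameCycle.refl _ _, rfl⟩
  · exact Or.inl ⟨_, C.sA1 d, by simp [p, C.tail_nx]⟩
  · exact Or.inr (Or.inl ⟨d, Perm.SameCycle.refl _ _, rfl⟩)
  · exact Or.inr (Or.inl ⟨_, C.sB0 d, rfl⟩)
  · exact Or.inl ⟨_, C.sB1 d, by simp [p, C.tail_nx]⟩
  · exact Or.inr (Or.inl ⟨_, C.sB2 d, rfl⟩)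
  · exact Or.inr (Or.inl ⟨_, C.sC0 d, rfl⟩)
  · exact Or.inr (Or.inl ⟨_, C.sC1 d, rfl⟩)
  · exact Or.inr (Or.inr ⟨d, Perm.SameCycle.refl _ _, rfl⟩)

lemma nx_ne (d : D) : C.nx d ≠ d := fun h => C.ne d (by rw [← C.tail_nx, h])

/-- The triangulation. -/
def tri [Finite D] : TriMap (D × K) (V ⊕ D ⊕ F) where
  φ := φ
  α := C.α
  αα := C.αf_inv
  φ3 := by rintro ⟨d, k⟩; simp [φ, kφ3]
  p := C.p
  p_φ := by
    rintro ⟨d, k⟩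
    cases k <;> simp [φ, kφ, α, αf, p, C.tail_symm, C.face_nx, C.rr, C.tail_nx]
  same := by
    intro x y h
    rcases C.canon x with ⟨d, h1, h2⟩ | ⟨d, h1, h2⟩ | ⟨d, h1, h2⟩ <;>
    rcases C.canon y with ⟨d', h1', h2'⟩ | ⟨d', h1', h2'⟩ | ⟨d', h1', h2'⟩ <;>
    rw [h2, h2'] at h <;> simp at h
    · exact h1.trans ((C.sA _ _ h).trans h1'.symm)
    · subst h; exact h1.trans h1'.symm
    · exact h1.trans ((C.sC _ _ h).trans h1'.symm)
  ne := by
    rintro ⟨d, k⟩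
    have h1 := C.ne d
    have h2 := C.nx_ne d
    cases k <;> simp [α, αf, p, h1, h2, h2.symm]
  inj := by
    rintro ⟨d, k⟩ ⟨e, l⟩ h1 h2
    have a1 := C.ne d
    have a2 := C.ne e
    have a3 := C.nn d
    have a4 := C.nn e
    have a5 := C.tail_nx d
    have a6 := C.tail_nx e
    have a7 := C.inj d e
    have a8 := C.tail_symm d
    have a9 := C.tail_symm e
    cases k <;> cases l <;> simp [α, αf, p] at h1 h2 <;> first | (simp; grind) | grind
  surj := by
    rintro (v | d | f)
    · obtain ⟨d, rfl⟩ := C.vsurj v; exact ⟨(d, .A0), rfl⟩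
    · exact ⟨(d, .A2), rfl⟩
    · obtain ⟨d, rfl⟩ := C.fsurj f; exact ⟨(d, .C2), rfl⟩

variable [Finite D]

lemma tri_adj (d : D) : C.tri.graph.Adj (.inl (C.tail d)) (.inl (C.tail (C.rv d))) :=
  ⟨(d, .A0), rfl, rfl⟩

lemma tri_conn [Nonempty V] (h : ∀ u v : V, Relation.ReflTransGen
    (fun a b => ∃ d, C.tail d = a ∧ C.tail (C.rv d) = b) u v) : C.tri.graph.Connected := by
  rw [SimpleGraph.connected_iff_exists_forall_reachable]
  obtain ⟨v0⟩ := ‹Nonempty V›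
  have hV : ∀ v, C.tri.graph.Reachable (.inl v0) (.inl v) := by
    intro v
    induction h v0 v with
    | refl => exact SimpleGraph.Reachable.refl _
    | tail _ h ih =>
      obtain ⟨d, rfl, rfl⟩ := h
      exact ih.trans (C.tri_adj d).reachable
  have hD : ∀ d, C.tri.graph.Reachable (.inl v0) (.inr (.inl d)) := by
    intro d
    have : C.tri.graph.Adj (.inl (C.tail (C.rv d))) (.inr (.inl d)) := ⟨(d, .A1), rfl, rfl⟩
    exact (hV _).trans this.reachable
  refine ⟨.inl v0, ?_⟩
  rintro (v | d | f)
  · exact hV v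
  · exact hD d
  · obtain ⟨d, rfl⟩ := C.fsurj f
    have : C.tri.graph.Adj (.inr (.inr (C.face d))) (.inr (.inl d)) :=
      ⟨(d, .C2), rfl, by simp [tri, α, αf, p]⟩
    exact (hD _).trans this.symm.reachable

lemma tri_far (w : V ⊕ D ⊕ F) : ∃ v, WBW.wbwDist C.tri.rs w (.inl v) ≤ 4 := by
  rcases w with v | d | f
  · refine ⟨v, ?_⟩
    obtain ⟨d, rfl⟩ := C.vsurj v
    refine ((Within.refl C.tri.rs 3 (C.tri.edge (d, .A0))).dist (C.tri.edge_mem _)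
      ?_ ?_).trans (by norm_num) <;> exact Sym2.mem_mk_left _ _
  · refine ⟨C.tail (C.rv d), ?_⟩
    refine ((Within.refl C.tri.rs 3 (C.tri.edge (d, .A1))).dist (C.tri.edge_mem _)
      ?_ ?_).trans (by norm_num)
    · exact Sym2.mem_mk_right _ _
    · exact Sym2.mem_mk_left _ _
  · obtain ⟨d, rfl⟩ := C.fsurj f
    refine ⟨C.tail (C.nx d), ?_⟩
    have h1 := C.tri.within_σ (C.nx d, .A2)
    have h2 := C.tri.within_σ (d, .B2)
    have e : C.tri.σ (C.nx d, .A2) = (d, .B2) := by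
      simp [TriMap.σ, tri, φ, α, αf, kφ]
    have e' : C.tri.σ (d, .B2) = (d, .C1) := rfl
    rw [e] at h1
    rw [e'] at h2
    have := (h1.trans h2).symm
    refine (this.dist (C.tri.edge_mem _) ?_ ?_).trans (by norm_num)
    · have : (Sum.inr (Sum.inr (C.face d)) : V ⊕ D ⊕ F) = C.p (C.α (d, .C1)) := by
        simp [p, α, αf, C.face_nx]
      rw [this]; exact Sym2.mem_mk_right _ _
    · have : (Sum.inl (C.tail (C.nx d)) : V ⊕ D ⊕ F) = C.p (C.α (C.nx d, .A2)) := by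
        simp [p, α, αf, C.tail_nx]
      rw [this]; exact Sym2.mem_mk_right _ _

lemma tri_step (d : D) : Within C.tri.rs 3 (C.tri.edge (d, .A0))
    (C.tri.edge (C.nx (C.rv d), .A0)) := by
  have h1 := C.tri.within_σ (d, .A0)
  have h2 := C.tri.within_σ (C.rv d, .A1)
  have h3 := C.tri.within_σ (C.rv d, .B1)
  exact (h1.trans h2).trans h3

end CM

section R
variable {V : Type} [Finite V] (R : WBW.RotationSystem V)

lemma rot_edge_symm (d : R.G.Dart) : (R.faceNext d.symm).edge = R.rot d.fst d.edge := by
  rw [TriMap.faceNext_edge, SimpleGraph.Dart.edge_symm]; rfl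

lemma faceNext_inj : Function.Injective R.faceNext := by
  intro d d' h
  have h1 : d.snd = d'.snd := congrArg (fun d : R.G.Dart => d.fst) h
  have h2 := congrArg SimpleGraph.Dart.edge h
  rw [TriMap.faceNext_edge, TriMap.faceNext_edge, h1] at h2
  have h3 := (R.rot d'.snd).injective h2
  have : d.symm = d'.symm := by
    apply TriMap.dart_ext
    · exact h1
    · rw [SimpleGraph.Dart.edge_symm, SimpleGraph.Dart.edge_symm, h3]
  exact SimpleGraph.Dart.symm_involutive.injective this

lemma dart_inc (d : R.G.Dart) : d.edge ∈ WBW.incidentSet R.G d.fst :=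
  ⟨d.edge_mem, Sym2.mem_mk_left _ _⟩

lemma dart_of_inc {v : V} {e : Sym2 V} (h : e ∈ WBW.incidentSet R.G v) :
    ∃ d : R.G.Dart, d.fst = v ∧ d.edge = e := by
  obtain ⟨h1, b, rfl⟩ := h
  exact ⟨⟨(v, b), h1⟩, rfl, rfl⟩

lemma iter_fst (n : ℕ) (d : R.G.Dart) :
    ((fun d : R.G.Dart => R.faceNext d.symm)^[n] d).fst = d.fst := by
  induction n with
  | zero => rfl
  | succ n ih => rw [Function.iterate_succ_apply', ← ih]; rfl

lemma iter_edge (n : ℕ) (d : R.G.Dart) :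
    ((fun d : R.G.Dart => R.faceNext d.symm)^[n] d).edge = (R.rot d.fst ^ n) d.edge := by
  induction n with
  | zero => rfl
  | succ n ih =>
    rw [Function.iterate_succ_apply', rot_edge_symm, ih, iter_fst, pow_succ', Perm.mul_apply]

lemma digon (hconn : R.G.Connected) (h3 : 3 ≤ Nat.card V) (d : R.G.Dart) :
    R.faceNext (R.faceNext d) ≠ d := by
  intro h
  have key : ∀ d : R.G.Dart, R.faceNext (R.faceNext d) = d →
      ∀ w, R.G.Adj d.snd w → w = d.fst := by
    intro d h w hw
    have h1 : (R.faceNext d).snd = d.fst := by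
      rw [← TriMap.faceNext_fst, h]
    have h2 : R.faceNext d = d.symm := by
      apply SimpleGraph.Dart.ext
      exact Prod.ext rfl h1
    have h4 : R.rot d.snd d.edge = d.edge := by
      rw [← TriMap.faceNext_edge, h2, SimpleGraph.Dart.edge_symm]
    have hinc : d.edge ∈ WBW.incidentSet R.G d.snd := ⟨d.edge_mem, Sym2.mem_mk_right _ _⟩
    have hinc' : s(d.snd, w) ∈ WBW.incidentSet R.G d.snd := ⟨hw, Sym2.mem_mk_left _ _⟩
    obtain ⟨n, hn⟩ := (R.rot_cycleOn d.snd).2 hinc hinc'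
    rw [Perm.zpow_apply_eq_self_of_apply_eq_self h4] at hn
    have e : d.edge = s(d.snd, d.fst) := Sym2.eq_swap
    rw [e, Sym2.congr_right] at hn
    exact hn.symm
  have k1 := key d h
  have k2 := key (R.faceNext d) (by rw [h])
  have h1 : (R.faceNext d).snd = d.fst := by
    rw [← TriMap.faceNext_fst, h]
  rw [h1, TriMap.faceNext_fst] at k2
  have hall : ∀ u v, R.G.Walk u v → (u = d.fst ∨ u = d.snd) → (v = d.fst ∨ v = d.snd) := by
    intro u v w
    induction w with
    | nil => exact id
    | cons h _ ih =>
      rintro (rfl | rfl)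
      · exact ih (Or.inr (k2 _ h))
      · exact ih (Or.inl (k1 _ h))
  have huniv : (Set.univ : Set V) ⊆ {d.fst, d.snd} := by
    intro v _
    obtain ⟨w⟩ := hconn.preconnected d.fst v
    exact hall _ _ w (Or.inl rfl)
  have := Set.ncard_le_ncard huniv (Set.toFinite _)
  rw [Set.ncard_univ] at this
  have h5 : ({d.fst, d.snd} : Set V).ncard ≤ 2 := by
    have := Set.ncard_insert_le d.fst {d.snd}
    rwa [Set.ncard_singleton] at this
  omega

instance : Finite R.G.Dart :=
  Finite.of_injective (fun d => d.toProd) (fun _ _ h => SimpleGraph.Dart.ext _ _ h)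

/-- Combinatorial map of a rotation system. -/
noncomputable def cm (hconn : R.G.Connected) (h3 : 3 ≤ Nat.card V) : CM R.G.Dart V R.Face where
  nx := Equiv.ofBijective R.faceNext (Finite.injective_iff_bijective.mp (faceNext_inj R))
  rv := SimpleGraph.Dart.symm
  rr := SimpleGraph.Dart.symm_symm
  tail d := d.fst
  face d := Quot.mk _ d
  tail_nx d := rfl
  face_nx d := (Quot.sound (r := fun a b : R.G.Dart => R.faceNext a = b)
    (a := d) (b := R.faceNext d) rfl).symm
  vsame := by
    intro x y h
    have hx := dart_inc R x
    have hy := dart_inc R y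
    rw [← h] at hy
    obtain ⟨n, hn⟩ := (R.rot_cycleOn x.fst).2 hx hy
    obtain ⟨m, -, hm⟩ := Perm.SameCycle.exists_pow_eq' (⟨n, hn⟩ : (R.rot x.fst).SameCycle _ _)
    refine ⟨m, TriMap.dart_ext ((iter_fst R m x).trans h) ((iter_edge R m x).trans hm)⟩
  fsame := by
    intro x y h
    have := Quot.eqvGen_exact h
    induction this with
    | rel x y h' => exact ⟨1, h'⟩
    | refl x => exact Perm.SameCycle.refl _ _
    | symm x y _ ih => exact (ih (by rw [h])).symm
    | trans x y z h1 h2 ih1 ih2 =>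
      exact (ih1 (Quot.eqvGen_sound h1)).trans (ih2 (Quot.eqvGen_sound h2))
  ne d := d.adj.ne
  inj := by
    intro x y h1 h2
    exact SimpleGraph.Dart.ext _ _ (Prod.ext h1 h2)
  nn := digon R hconn h3
  vsurj := by
    intro v
    have : Nontrivial V := by
      rw [← Finite.one_lt_card_iff_nontrivial]; omega
    obtain ⟨w, hw⟩ := hconn.preconnected.exists_adj_of_nontrivial v
    exact ⟨⟨(v, w), hw⟩, rfl⟩
  fsurj := Quot.exists_rep

variable (hconn : R.G.Connected) (h3 : 3 ≤ Nat.card V)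

lemma edge_A0 (d : R.G.Dart) :
    (cm R hconn h3).tri.edge (d, .A0) = Sym2.map Sum.inl d.edge := rfl

lemma within_att {e e' : Sym2 V} (h : WBW.Attached R e e') :
    Within (cm R hconn h3).tri.rs 3 (Sym2.map Sum.inl e) (Sym2.map Sum.inl e') := by
  have key : ∀ (v : V) (e e' : Sym2 V), e ∈ WBW.incidentSet R.G v → R.rot v e = e' →
      Within (cm R hconn h3).tri.rs 3 (Sym2.map Sum.inl e) (Sym2.map Sum.inl e') := by
    intro v e e' he h
    obtain ⟨d, rfl, rfl⟩ := dart_of_inc R he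
    have := (cm R hconn h3).tri_step d
    rw [edge_A0, edge_A0] at this
    rw [← h, ← rot_edge_symm]
    exact this
  obtain ⟨v, h1, h2, h | h⟩ := h
  · exact key v e e' h1 h
  · exact (key v e' e h2 h).symm

lemma within_list (L : List (Sym2 V)) : ∀ (e e' : Sym2 V),
    (e :: L).IsChain (WBW.Attached R) → (e :: L).getLast? = some e' →
    Within (cm R hconn h3).tri.rs (3 * L.length) (Sym2.map Sum.inl e) (Sym2.map Sum.inl e') := by
  induction L with
  | nil =>
    intro e e' _ h
    simp at h
    subst h
    exact Within.refl _ _ _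
  | cons f L ih =>
    intro e e' hc hl
    rw [List.isChain_cons_cons] at hc
    rw [List.getLast?_cons_cons] at hl
    have := (within_att R hconn h3 hc.1).trans (ih f e' hc.2 hl)
    rw [List.length_cons]
    rwa [show 3 * (L.length + 1) = 3 + 3 * L.length by ring]

lemma tri_dist (x y : V) :
    WBW.wbwDist (cm R hconn h3).tri.rs (.inl x) (.inl y) ≤ 4 * WBW.wbwDist R x y := by
  have key : ∀ L, WBW.IsWbwWalkFromTo R x y L →
      WBW.wbwDist (cm R hconn h3).tri.rs (.inl x) (.inl y) ≤ ((4 * L.length : ℕ) : ℕ∞) := by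
    rintro L ⟨⟨hne, -, hmem, hch⟩, ⟨e, he, hx⟩, ⟨e', he', hy⟩⟩
    obtain ⟨f, L, rfl⟩ := List.exists_cons_of_ne_nil hne
    simp only [List.head?_cons, Option.some.injEq] at he
    subst he
    have := within_list R hconn h3 L f e' hch he'
    have hf : Sym2.map Sum.inl f ∈ (cm R hconn h3).tri.rs.G.edgeSet := by
      obtain ⟨d, -, rfl⟩ := dart_of_inc R (v := x) ⟨hmem f (by simp), hx⟩
      exact (cm R hconn h3).tri.edge_mem (d, .A0)
    refine (this.dist hf (Sym2.mem_map.mpr ⟨x, hx, rfl⟩) (Sym2.mem_map.mpr ⟨y, hy, rfl⟩)).trans ?_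
    rw [List.length_cons]
    exact_mod_cast (by omega)
  by_cases hw : ∃ L, WBW.IsWbwWalkFromTo R x y L
  · have hne : {n : ℕ∞ | ∃ L, WBW.IsWbwWalkFromTo R x y L ∧ (L.length : ℕ∞) = n}.Nonempty := by
      obtain ⟨L, hL⟩ := hw
      exact ⟨_, L, hL, rfl⟩
    obtain ⟨L, hL, h⟩ := csInf_mem hne
    have h' : WBW.wbwDist R x y = L.length := h.symm
    rw [h']
    exact_mod_cast key L hL
  · have : WBW.wbwDist R x y = ⊤ := by
      apply top_le_iff.mp
      apply le_sInf
      rintro n ⟨L, hL, -⟩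
      exact absurd ⟨L, hL⟩ hw
    rw [this, ENat.mul_top (by norm_num)]
    exact le_top

lemma cm_conn : (cm R hconn h3).tri.graph.Connected := by
  have := hconn.nonempty
  apply CM.tri_conn
  intro u v
  obtain ⟨w⟩ := hconn.preconnected u v
  induction w with
  | nil => exact Relation.ReflTransGen.refl
  | cons h _ ih => exact Relation.ReflTransGen.head ⟨⟨(_, _), h⟩, rfl, rfl⟩ ih

instance : Finite R.Face := Quot.finite _

lemma cm_euler (hconn : R.G.Connected) (h3 : 3 ≤ Nat.card V) (hplane : R.IsPlane) :
    6 * Nat.card (V ⊕ R.G.Dart ⊕ R.Face) = Nat.card (R.G.Dart × K) + 12 := by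
  have h2 := TriMap.card_darts R.G
  unfold WBW.RotationSystem.IsPlane at hplane
  have h5 : Nat.card {v : V | ∀ w, ¬ R.G.Adj v w} = 0 := by
    rw [Nat.card_coe_set_eq, Set.ncard_eq_zero]
    ext v
    simp only [Set.mem_setOf_eq, Set.mem_empty_iff_false, iff_false, not_forall, not_not]
    obtain ⟨d, rfl⟩ := (cm R hconn h3).vsurj v
    exact ⟨_, d.adj⟩
  have h4 : Nat.card R.G.ConnectedComponent = 1 := by
    have : Subsingleton R.G.ConnectedComponent :=
      hconn.preconnected.subsingleton_connectedComponent
    exact Nat.card_of_subsingleton (R.G.connectedComponentMk hconn.nonempty.some)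
  have h6 : R.numFaces = Nat.card R.Face := rfl
  rw [h4, h5, h6] at hplane
  rw [Nat.card_sum, Nat.card_sum, Nat.card_prod, card_K]
  omega

end R

lemma power_sub {V W : Type} {R : WBW.RotationSystem V} {S : WBW.RotationSystem W} {τ : V → W}
    (h : WBW.SubgraphVia R.G S.G τ)
    (hd : ∀ x y : V, WBW.wbwDist S (τ x) (τ y) ≤ 4 * WBW.wbwDist R x y) (l : ℕ) :
    WBW.SubgraphVia (R.power l) (S.power (4 * l)) τ := by
  refine ⟨h.1, ?_⟩
  have hle : ∀ x y, WBW.wbwDist R x y ≤ (l : ℕ∞) →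
      WBW.wbwDist S (τ x) (τ y) ≤ ((4 * l : ℕ) : ℕ∞) := by
    intro x y hxy
    refine (hd x y).trans ?_
    push_cast
    gcongr
  intro x y hxy
  unfold WBW.RotationSystem.power at hxy ⊢
  rw [SimpleGraph.sup_adj, SimpleGraph.fromRel_adj] at hxy ⊢
  rcases hxy with hxy | ⟨hne, hxy⟩
  · exact Or.inl (h.2 x y hxy)
  · exact Or.inr ⟨h.1.ne hne, hxy.imp (hle x y) (hle y x)⟩

end TM

/-- Lemma 2: every simple connected plane graph `H` is a subgraph, via
an injection `τ`, of a 3-connected triangulated simple plane graph `H_Δ` such that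
`wbw_{H_Δ}(τ x, τ y) ≤ 4 · wbw_H(x, y)`, every vertex of `H_Δ` is within
wall-by-wall distance at most 4 from `τ(V(H))`, and `H^λ ⊆ H_Δ^{4λ}` for every `λ`. -/
theorem exists_triangulated_supergraph (V : Type) [Finite V]
    (R : WBW.RotationSystem V) (hplane : R.IsPlane) (hconn : R.G.Connected) :
    ∃ (W : Type) (_ : Finite W) (S : WBW.RotationSystem W) (τ : V → W),
      S.IsPlane ∧
      (WBW.ThreeConnected S.G ∧ S.Triangulated) ∧
      WBW.SubgraphVia R.G S.G τ ∧
      (∀ x y : V, WBW.wbwDist S (τ x) (τ y) ≤ 4 * WBW.wbwDist R x y) ∧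
      (∀ w : W, ∃ v : V, WBW.wbwDist S w (τ v) ≤ 4) ∧
      (∀ l : ℕ, WBW.SubgraphVia (R.power l) (S.power (4 * l)) τ) := by
  by_cases h3 : 3 ≤ Nat.card V
  · let C := TM.cm R hconn h3
    have hc : C.tri.graph.Connected := TM.cm_conn R hconn h3
    have hE := TM.cm_euler R hconn h3 hplane
    have hcard : 3 < Nat.card (V ⊕ R.G.Dart ⊕ R.Face) := by
      obtain ⟨v⟩ := hconn.nonempty
      obtain ⟨d, -⟩ := C.vsurj v
      have : Nonempty R.G.Dart := ⟨d⟩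
      have := Nat.card_pos (α := R.G.Dart)
      rw [Nat.card_sum, Nat.card_sum]
      omega
    have hsub : WBW.SubgraphVia R.G C.tri.rs.G Sum.inl :=
      ⟨Sum.inl_injective, fun x y h => C.tri_adj ⟨(x, y), h⟩⟩
    have hd := TM.tri_dist R hconn h3
    exact ⟨_, inferInstance, C.tri.rs, Sum.inl, C.tri.isPlane hc hE,
      ⟨C.tri.threeConnected hc hcard, C.tri.triangulated⟩, hsub, hd, C.tri_far,
      TM.power_sub hsub hd⟩
  · have : Nonempty (V ↪ Fin 4) := by
      have := Fintype.ofFinite V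
      apply Function.Embedding.nonempty_of_card_le
      rw [← Nat.card_eq_fintype_card, Fintype.card_fin]
      omega
    obtain ⟨τ⟩ := this
    have hsub : WBW.SubgraphVia R.G TM.k4.rs.G τ :=
      ⟨τ.injective, fun x y h => TM.k4_adj (τ.injective.ne h.ne)⟩
    have hd : ∀ x y : V, WBW.wbwDist TM.k4.rs (τ x) (τ y) ≤ 4 * WBW.wbwDist R x y := by
      intro x y
      calc WBW.wbwDist TM.k4.rs (τ x) (τ y) ≤ 1 := TM.k4_dist _ _
        _ ≤ 4 * 1 := by norm_num
        _ ≤ 4 * WBW.wbwDist R x y := by gcongr; exact TM.one_le_dist R x y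
    exact ⟨Fin 4, inferInstance, TM.k4.rs, τ, TM.k4.isPlane TM.k4_conn (by simp),
      ⟨TM.k4.threeConnected TM.k4_conn (by simp), TM.k4.triangulated⟩, hsub, hd,
      fun w => ⟨hconn.nonempty.some, (TM.k4_dist _ _).trans (by norm_num)⟩,
      TM.power_sub hsub hd⟩
end

section
/- There is a recursive function f : ℕ → ℕ such that every λ-flat graph on n vertices has at most f(λ)·n edges. -/
namespace WBWProof
open Classical

noncomputable def dl {X : Type*} (p q : X) : ZMod 2 := if p = q then 1 else 0

theorem zadd (x : ZMod 2) : x + x = 0 := CharTwo.add_self_eq_zero x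

theorem dl_sum {X Y : Type*} [Fintype X] (π : X → Y) (x : X) (v : Y) :
    ∑ p, (if π p = v then dl x p else 0) = dl (π x) v := by
  simp only [dl]
  rw [Finset.sum_eq_single x]
  · simp
  · intro b _ hb
    simp [Ne.symm hb]
  · simp

/-- Chains joining connected points. -/
theorem chain_exists {X Y V : Type*} [Fintype Y] (a b : Y → X) (π : X → V) (p p' : X)
    (h : Relation.EqvGen (fun u v => ∃ y, π (a y) = π (b y) ∧ a y = u ∧ b y = v) p p') :
    ∃ c : Y → ZMod 2, (∀ y, π (a y) ≠ π (b y) → c y = 0) ∧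
      ∀ t, ∑ y, c y * (dl (a y) t + dl (b y) t) = dl p t + dl p' t := by
  induction h with
  | rel u v h =>
    obtain ⟨y, h1, rfl, rfl⟩ := h
    refine ⟨fun y' => dl y y', ?_, ?_⟩
    · intro y' h'
      simp only [dl]
      rw [if_neg]
      rintro rfl
      exact h' h1
    · intro t
      rw [Finset.sum_eq_single y]
      · simp [dl]
      · intro b _ hb
        simp [dl, Ne.symm hb]
      · simp
  | refl u => exact ⟨0, by simp, by simp [zadd]⟩
  | symm u v _ ih =>
    obtain ⟨c, h1, h2⟩ := ih
    exact ⟨c, h1, fun t => by rw [h2, add_comm]⟩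
  | trans u v w _ _ ih1 ih2 =>
    obtain ⟨c, h1, h2⟩ := ih1
    obtain ⟨c', h1', h2'⟩ := ih2
    refine ⟨c + c', fun y hy => by simp [h1 y hy, h1' y hy], fun t => ?_⟩
    simp only [Pi.add_apply, add_mul, Finset.sum_add_distrib, h2, h2']
    linear_combination zadd (dl v t)

theorem supp_three {I V : Type*} [Fintype I] (x y : I → V) (hne : ∀ i, x i ≠ y i)
    (hinj : Function.Injective fun i => s(x i, y i)) (z : I → ZMod 2)
    (hz : ∀ v, ∑ i, z i * (dl (x i) v + dl (y i) v) = 0) (hz0 : z ≠ 0) :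
    3 ≤ (Finset.univ.filter fun i => z i ≠ 0).card := by
  have key : ∀ i, z i ≠ 0 → ∀ v, v ∈ s(x i, y i) → ∃ j, j ≠ i ∧ z j ≠ 0 ∧ v ∈ s(x j, y j) := by
    intro i hi v hv
    by_contra! hcon
    have h := hz v
    rw [Finset.sum_eq_single i] at h
    · rcases mul_eq_zero.1 h with h | h
      · exact hi h
      · have := hne i
        simp only [Sym2.mem_iff] at hv
        rcases hv with rfl | rfl
        · simp [dl, this.symm] at h
        · simp [dl, this] at h
    · intro j _ hj
      by_cases h0 : z j = 0
      · simp [h0]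
      · have := hcon j hj h0
        simp only [Sym2.mem_iff, not_or] at this
        simp [dl, Ne.symm this.1, Ne.symm this.2]
    · simp
  obtain ⟨i, hi⟩ : ∃ i, z i ≠ 0 := by
    by_contra! h
    exact hz0 (funext h)
  obtain ⟨j, hji, hj, hxj⟩ := key i hi (x i) (by simp)
  obtain ⟨k, hki, hk, hyk⟩ := key i hi (y i) (by simp)
  have hjk : j ≠ k := by
    rintro rfl
    apply hji
    apply hinj
    exact ((Sym2.mem_and_mem_iff (hne i)).1 ⟨hxj, hyk⟩)
  have : ({i, j, k} : Finset I) ⊆ Finset.univ.filter fun i => z i ≠ 0 := by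
    intro t ht
    simp only [Finset.mem_insert, Finset.mem_singleton] at ht
    rcases ht with rfl | rfl | rfl <;> simp [hi, hj, hk]
  calc 3 = ({i, j, k} : Finset I).card := by
        rw [Finset.card_eq_three.2 ⟨i, j, k, hji.symm, hki.symm, hjk, rfl⟩]
    _ ≤ _ := Finset.card_le_card this

/-- Sparse bound for minors of "planar" 2-complexes. -/
theorem minor_bound {X Y F V I : Type*} [Fintype X] [Fintype Y] [Fintype F] [Fintype V]
    [Fintype I] (a b : Y → X) (l r : Y → F)
    (hcx : ∀ s : F → ZMod 2, ∀ p, ∑ y, (s (l y) + s (r y)) * (dl (a y) p + dl (b y) p) = 0)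
    (hex : ∀ z : Y → ZMod 2, (∀ p, ∑ y, z y * (dl (a y) p + dl (b y) p) = 0) →
      ∃ s : F → ZMod 2, ∀ y, z y = s (l y) + s (r y))
    (π : X → V) (τ : V → X) (q : I → Y)
    (hne : ∀ i, π (a (q i)) ≠ π (b (q i)))
    (hinj : Function.Injective fun i => s(π (a (q i)), π (b (q i))))
    (hca : ∀ i, Relation.EqvGen (fun u v => ∃ y, π (a y) = π (b y) ∧ a y = u ∧ b y = v)
      (a (q i)) (τ (π (a (q i)))))
    (hcb : ∀ i, Relation.EqvGen (fun u v => ∃ y, π (a y) = π (b y) ∧ a y = u ∧ b y = v)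
      (b (q i)) (τ (π (b (q i))))) :
    Fintype.card I ≤ 3 * Fintype.card V := by
  have hqinj : Function.Injective q := fun i j h => hinj (by simp [h])
  set x : I → V := fun i => π (a (q i)) with hx
  set y : I → V := fun i => π (b (q i)) with hy
  -- boundary map
  let bd : (I → ZMod 2) →ₗ[ZMod 2] (V → ZMod 2) :=
    { toFun := fun z v => ∑ i, z i * (dl (x i) v + dl (y i) v)
      map_add' := by
        intro z z'
        funext v
        simp [add_mul, Finset.sum_add_distrib]
      map_smul' := by
        intro c z
        funext v
        simp [Finset.mul_sum, mul_assoc] }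
  have hdim : Fintype.card I ≤ Module.finrank (ZMod 2) (LinearMap.ker bd) + Fintype.card V := by
    have h1 := LinearMap.finrank_range_add_finrank_ker bd
    have h2 := Submodule.finrank_le (LinearMap.range bd)
    simp only [Module.finrank_fintype_fun_eq_card] at h1 h2
    omega
  let rel : F → F → Prop := fun f f' =>
    ∃ u, (π (a u) ≠ π (b u) ∧ u ∉ Set.range q) ∧ l u = f ∧ r u = f'
  let C := Quot rel
  have : Finite C := Finite.of_surjective (Quot.mk rel) Quot.mk_surjective
  have : Fintype C := Fintype.ofFinite C
  let Φ : (C → ZMod 2) →ₗ[ZMod 2] (I → ZMod 2) :=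
    { toFun := fun t i => t (Quot.mk _ (l (q i))) + t (Quot.mk _ (r (q i)))
      map_add' := by
        intro z z'
        funext v
        simp only [Pi.add_apply]
        ring
      map_smul' := by
        intro c z
        funext v
        simp [mul_add] }
  have hΦ : ∀ t, Φ t ∈ LinearMap.ker bd := by
    intro t
    rw [LinearMap.mem_ker]
    funext v
    change ∑ i, (t (Quot.mk _ (l (q i))) + t (Quot.mk _ (r (q i)))) * (dl (x i) v + dl (y i) v) = 0
    let s : F → ZMod 2 := fun f => t (Quot.mk _ f)
    have h1 : ∑ p, (if π p = v then
        ∑ u, (s (l u) + s (r u)) * (dl (a u) p + dl (b u) p) else 0) = 0 := by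
      apply Finset.sum_eq_zero
      intro p _
      rw [hcx s p]
      simp
    have h2 : ∑ u, (s (l u) + s (r u)) * (dl (π (a u)) v + dl (π (b u)) v) = 0 := by
      rw [← h1]
      simp_rw [← dl_sum π _ v, ← Finset.sum_add_distrib, Finset.mul_sum]
      rw [Finset.sum_comm]
      refine Finset.sum_congr rfl fun p _ => ?_
      split_ifs <;> simp
    rw [← h2]
    have h3 : ∀ u, u ∉ Finset.univ.image q →
        (s (l u) + s (r u)) * (dl (π (a u)) v + dl (π (b u)) v) = 0 := by
      intro u hu
      by_cases hp : π (a u) = π (b u)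
      · rw [hp, zadd, mul_zero]
      · have : s (l u) = s (r u) := by
          refine congrArg t (Quot.sound ⟨u, ⟨hp, ?_⟩, rfl, rfl⟩)
          rintro ⟨i, rfl⟩
          simp at hu
        rw [this, zadd, zero_mul]
    rw [← Finset.sum_subset (Finset.subset_univ (Finset.univ.image q)) (fun u _ hu => h3 u hu),
      Finset.sum_image (fun i _ j _ h => hqinj h)]
  have hsurj : LinearMap.ker bd ≤ LinearMap.range Φ := by
    intro z hz
    rw [LinearMap.mem_ker] at hz
    have hz' : ∀ v, ∑ i, z i * (dl (x i) v + dl (y i) v) = 0 := fun v => congrFun hz v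
    choose ca ca0 ca1 using fun i => chain_exists a b π _ _ (hca i)
    choose cb cb0 cb1 using fun i => chain_exists a b π _ _ (hcb i)
    let w : Y → ZMod 2 := fun u => ∑ i, z i * (dl (q i) u + ca i u + cb i u)
    have hw : ∀ p, ∑ u, w u * (dl (a u) p + dl (b u) p) = 0 := by
      intro p
      simp only [w, Finset.sum_mul]
      rw [Finset.sum_comm]
      have h1 : ∀ i, ∑ u, z i * (dl (q i) u + ca i u + cb i u) * (dl (a u) p + dl (b u) p)
          = z i * (dl (τ (x i)) p + dl (τ (y i)) p) := by
        intro i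
        simp_rw [mul_assoc]
        rw [← Finset.mul_sum]
        congr 1
        simp_rw [add_mul, Finset.sum_add_distrib]
        have e1 := ca1 i p
        have e2 := cb1 i p
        simp_rw [mul_add, Finset.sum_add_distrib] at e1 e2 ⊢
        have e3 : ∀ g : Y → ZMod 2, ∑ u, dl (q i) u * g u = g (q i) := by
          intro g
          simp [dl]
        rw [e3, e3]
        linear_combination e1 + e2 + zadd (dl (a (q i)) p) + zadd (dl (b (q i)) p)
      simp_rw [h1]
      have h2 : ∑ v, (if τ v = p then ∑ i, z i * (dl (x i) v + dl (y i) v) else 0) = 0 := by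
        simp [hz']
      rw [← h2]
      simp_rw [← dl_sum τ _ p, ← Finset.sum_add_distrib, Finset.mul_sum]
      rw [Finset.sum_comm]
      refine Finset.sum_congr rfl fun p _ => ?_
      split_ifs <;> simp
    obtain ⟨s, hs⟩ := hex w hw
    have hsr : ∀ f f', rel f f' → s f = s f' := by
      rintro _ _ ⟨u, ⟨hu1, hu2⟩, rfl, rfl⟩
      have h0 : w u = 0 := by
        refine Finset.sum_eq_zero fun i _ => ?_
        have : q i ≠ u := fun h => hu2 ⟨i, h⟩
        rw [ca0 i u hu1, cb0 i u hu1]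
        simp [dl, this]
      have := hs u
      rw [h0] at this
      exact (CharTwo.add_eq_zero.1 this.symm)
    refine ⟨Quot.lift s hsr, ?_⟩
    funext j
    change s (l (q j)) + s (r (q j)) = z j
    rw [← hs]
    change ∑ i, z i * (dl (q i) (q j) + ca i (q j) + cb i (q j)) = z j
    rw [Finset.sum_eq_single j]
    · rw [ca0 _ _ (hne j), cb0 _ _ (hne j)]
      simp [dl]
    · intro i _ hij
      rw [ca0 _ _ (hne j), cb0 _ _ (hne j)]
      simp [dl, hqinj.ne hij]
    · simp
  -- count
  let N : Finset C := Finset.univ.filter fun c => Φ (Pi.single c 1) ≠ 0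
  have hN : Module.finrank (ZMod 2) (LinearMap.ker bd) ≤ N.card := by
    have h1 : LinearMap.ker bd ≤
        Submodule.span (ZMod 2) ((N.image fun c => Φ (Pi.single c 1) : Finset _) : Set (I → ZMod 2)) := by
      refine hsurj.trans ?_
      rintro _ ⟨t, rfl⟩
      have : t = ∑ c, t c • (Pi.single c 1 : C → ZMod 2) := by
        funext c'
        simp [Finset.sum_apply, Pi.single_apply]
      rw [this, map_sum]
      refine Submodule.sum_mem _ fun c _ => ?_
      rw [map_smul]
      refine Submodule.smul_mem _ _ ?_
      by_cases hc : Φ (Pi.single c 1) = 0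
      · rw [hc]; exact Submodule.zero_mem _
      · refine Submodule.subset_span ?_
        simp only [Finset.coe_image, Set.mem_image]
        exact ⟨c, by simp [N, hc], rfl⟩
    exact (Submodule.finrank_mono h1).trans
      ((finrank_span_finset_le_card _).trans Finset.card_image_le)
  have h3 : 3 * N.card ≤ 2 * Fintype.card I := by
    have e1 : ∀ c ∈ N, 3 ≤ (Finset.univ.filter fun i => Φ (Pi.single c 1) i ≠ 0).card := by
      intro c hc
      refine supp_three x y hne hinj _ (fun v => ?_) (Finset.mem_filter.1 hc).2
      exact congrFun (LinearMap.mem_ker.1 (hΦ (Pi.single c 1))) v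
    have e2 := Finset.sum_le_sum e1
    have e3 := Finset.sum_card_bipartiteAbove_eq_sum_card_bipartiteBelow (s := N)
      (t := (Finset.univ : Finset I)) (fun c i => Φ (Pi.single c 1) i ≠ 0)
    simp only [Finset.bipartiteAbove, Finset.bipartiteBelow] at e3
    rw [e3] at e2
    have e4 : ∀ i ∈ (Finset.univ : Finset I), (N.filter fun c => Φ (Pi.single c 1) i ≠ 0).card ≤ 2 := by
      intro i _
      have : (N.filter fun c => Φ (Pi.single c 1) i ≠ 0) ⊆
          {Quot.mk _ (l (q i)), Quot.mk _ (r (q i))} := by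
        intro c hc
        by_contra hcc
        simp only [Finset.mem_insert, Finset.mem_singleton, not_or] at hcc
        apply (Finset.mem_filter.1 hc).2
        change (Pi.single c 1 : C → ZMod 2) (Quot.mk _ (l (q i))) + 
          (Pi.single c 1 : C → ZMod 2) (Quot.mk _ (r (q i))) = 0
        rw [Pi.single_eq_of_ne (Ne.symm hcc.1), Pi.single_eq_of_ne (Ne.symm hcc.2), add_zero]
      exact (Finset.card_le_card this).trans Finset.card_le_two
    have e5 := Finset.sum_le_sum e4
    have e6 := e2.trans e5
    simp only [Finset.sum_const, smul_eq_mul, Finset.card_univ] at e6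
    omega
  omega

open WBW

section H
variable {W : Type*}

theorem faceNext_fst (R : RotationSystem W) (d : R.G.Dart) : (R.faceNext d).fst = d.snd := rfl

theorem faceNext_edge (R : RotationSystem W) (d : R.G.Dart) :
    (R.faceNext d).edge = R.rot d.snd d.edge := by
  unfold RotationSystem.faceNext
  simp only [SimpleGraph.Dart.edge, Sym2.other_spec]

theorem dart_ext_snd {G : SimpleGraph W} {d d' : G.Dart} (h1 : d.edge = d'.edge)
    (h2 : d.snd = d'.snd) : d = d' := by
  rcases (SimpleGraph.dart_edge_eq_iff d d').1 h1 with h | h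
  · exact h
  · subst h
    exact absurd h2 (by simp)

theorem faceNext_inj (R : RotationSystem W) : Function.Injective R.faceNext := by
  intro d d' h
  have h1 : d.snd = d'.snd := by
    rw [← faceNext_fst, ← faceNext_fst, h]
  refine dart_ext_snd ?_ h1
  have := congrArg SimpleGraph.Dart.edge h
  rw [faceNext_edge, faceNext_edge, h1] at this
  exact (R.rot _).injective this

variable [Fintype W]

noncomputable def phi (R : RotationSystem W) : Equiv.Perm R.G.Dart :=
  Equiv.ofBijective R.faceNext (Finite.injective_iff_bijective.1 (faceNext_inj R))

theorem phi_apply (R : RotationSystem W) (d : R.G.Dart) : phi R d = R.faceNext d := rfl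

noncomputable def symmE (G : SimpleGraph W) : Equiv.Perm G.Dart :=
  ⟨SimpleGraph.Dart.symm, SimpleGraph.Dart.symm, fun d => by simp, fun d => by simp⟩

theorem symmE_apply (G : SimpleGraph W) (d : G.Dart) : symmE G d = d.symm := rfl

abbrev fc (R : RotationSystem W) (d : R.G.Dart) :
    Quot (fun a b : R.G.Dart => R.faceNext a = b) := Quot.mk _ d

theorem fc_phi (R : RotationSystem W) (d : R.G.Dart) : fc R (phi R d) = fc R d :=
  (Quot.sound (r := fun a b : R.G.Dart => R.faceNext a = b) rfl).symm

theorem fc_phi_symm (R : RotationSystem W) (d : R.G.Dart) : fc R ((phi R).symm d) = fc R d := by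
  rw [← fc_phi, Equiv.apply_symm_apply]

theorem rot_reach (R : RotationSystem W) (P : R.G.Dart → Prop)
    (h1 : ∀ d, P d ↔ P (R.faceNext d)) (h2 : ∀ d, P d ↔ P d.symm) (d d' : R.G.Dart)
    (h : d.snd = d'.snd) : P d → P d' := by
  intro hd
  have hm : ∀ d : R.G.Dart, d.edge ∈ incidentSet R.G d.snd := fun d =>
    ⟨d.edge_mem, by rcases d with ⟨⟨a, b⟩, h⟩; simp [SimpleGraph.Dart.edge]⟩
  have hm' := hm d'
  rw [← h] at hm'
  obtain ⟨n, hn⟩ := (R.rot_cycleOn d.snd).exists_pow_eq' (Set.toFinite _) (hm d) hm'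
  have key : ∀ n : ℕ, ∃ d'' : R.G.Dart, d''.snd = d.snd ∧
      d''.edge = ((R.rot d.snd) ^ n) d.edge ∧ P d'' := by
    intro n
    induction n with
    | zero => exact ⟨d, rfl, by simp, hd⟩
    | succ n ih =>
      obtain ⟨c, c1, c2, c3⟩ := ih
      refine ⟨(R.faceNext c).symm, ?_, ?_, ?_⟩
      · change (R.faceNext c).fst = _
        rw [faceNext_fst, c1]
      · rw [SimpleGraph.Dart.edge_symm, faceNext_edge, c1, c2, pow_succ']
        rfl
      · exact (h2 _).1 ((h1 _).1 c3)
  obtain ⟨c, c1, c2, c3⟩ := key n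
  have : c = d' := dart_ext_snd (c2.trans hn) (c1.trans h)
  exact this ▸ c3

theorem sum_dart_edge (G : SimpleGraph W) (de : G.edgeSet → G.Dart)
    (hde : ∀ e, (de e).edge = e.1) (f : G.Dart → ZMod 2) :
    ∑ d, f d = ∑ e, (f (de e) + f (de e).symm) := by
  rw [← Finset.sum_fiberwise (s := Finset.univ) (g := fun d : G.Dart => (⟨d.edge, d.edge_mem⟩ : G.edgeSet))]
  refine Finset.sum_congr rfl fun e _ => ?_
  have : (Finset.univ.filter fun d : G.Dart => (⟨d.edge, d.edge_mem⟩ : G.edgeSet) = e)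
      = {de e, (de e).symm} := by
    ext d
    simp only [Finset.mem_filter, Finset.mem_univ, true_and, Finset.mem_insert,
      Finset.mem_singleton, Subtype.ext_iff, ← hde e]
    exact SimpleGraph.dart_edge_eq_iff d (de e)
  rw [this, Finset.sum_pair (SimpleGraph.Dart.symm_ne _).symm]

theorem H_cx (R : RotationSystem W) (s : Quot (fun a b : R.G.Dart => R.faceNext a = b) → ZMod 2)
    (v : W) : ∑ d : R.G.Dart, (s (fc R d) + s (fc R d.symm)) * dl d.snd v = 0 := by
  simp_rw [add_mul, Finset.sum_add_distrib]
  rw [← Equiv.sum_comp (symmE R.G) (fun d => s (fc R d.symm) * dl d.snd v)]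
  rw [← Equiv.sum_comp (phi R) (fun d => s (fc R (symmE R.G d).symm) * dl (symmE R.G d).snd v)]
  have : ∀ d, s (fc R (symmE R.G (phi R d)).symm) * dl (symmE R.G (phi R d)).snd v
      = s (fc R d) * dl d.snd v := by
    intro d
    rw [symmE_apply, SimpleGraph.Dart.symm_symm, fc_phi]
    rfl
  simp_rw [this]
  exact zadd _

theorem H_exact (R : RotationSystem W) (hR : R.IsPlane) (w : R.G.Dart → ZMod 2)
    (hsym : ∀ d, w d.symm = w d) (hcyc : ∀ v, ∑ d, w d * dl d.snd v = 0) :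
    ∃ s : Quot (fun a b : R.G.Dart => R.faceNext a = b) → ZMod 2,
      ∀ d, w d = s (fc R d) + s (fc R d.symm) := by
  let F := Quot (fun a b : R.G.Dart => R.faceNext a = b)
  have : Finite F := Finite.of_surjective (Quot.mk _) Quot.mk_surjective
  have : Fintype F := Fintype.ofFinite F
  have hde : ∀ e : R.G.edgeSet, ∃ d : R.G.Dart, d.edge = e.1 := by
    rintro ⟨e, he⟩
    induction e with
    | h a b => exact ⟨⟨(a, b), he⟩, rfl⟩
  choose de hde using hde
  have hde' : ∀ d : R.G.Dart, d = de ⟨d.edge, d.edge_mem⟩ ∨ d = (de ⟨d.edge, d.edge_mem⟩).symm :=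
    fun d => (SimpleGraph.dart_edge_eq_iff _ _).1 (hde ⟨d.edge, d.edge_mem⟩).symm
  let δ : (F → ZMod 2) →ₗ[ZMod 2] (R.G.edgeSet → ZMod 2) :=
    { toFun := fun s e => s (fc R (de e)) + s (fc R (de e).symm)
      map_add' := by
        intro z z'
        funext v
        simp only [Pi.add_apply]
        ring
      map_smul' := by
        intro c z
        funext v
        simp [mul_add] }
  let B : Matrix W R.G.edgeSet (ZMod 2) := fun v e => dl (de e).fst v + dl (de e).snd v
  have hB : ∀ z v, B.mulVecLin z v = ∑ e, z e * (dl (de e).fst v + dl (de e).snd v) := by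
    intro z v
    exact Finset.sum_congr rfl fun e _ => mul_comm _ _
  have hBT : ∀ u e, B.transpose.mulVecLin u e = u (de e).fst + u (de e).snd := by
    intro u e
    change ∑ v, (dl (de e).fst v + dl (de e).snd v) * u v = _
    simp only [add_mul, Finset.sum_add_distrib]
    simp [dl]
  have hBTk : ∀ u, u ∈ LinearMap.ker B.transpose.mulVecLin ↔ ∀ d : R.G.Dart, u d.fst = u d.snd := by
    intro u
    rw [LinearMap.mem_ker]
    constructor
    · intro h d
      have h1 := congrFun h ⟨d.edge, d.edge_mem⟩
      rw [hBT] at h1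
      have h2 := CharTwo.add_eq_zero.1 h1
      rcases hde' d with h | h
      · rw [h]; exact h2
      · rw [h]; exact h2.symm
    · intro h
      funext e
      rw [hBT, h]
      exact zadd _
  have hle : LinearMap.range δ ≤ LinearMap.ker B.mulVecLin := by
    rintro _ ⟨s, rfl⟩
    rw [LinearMap.mem_ker]
    funext v
    rw [hB]
    have := H_cx R s v
    rw [sum_dart_edge R.G de hde] at this
    rw [Pi.zero_apply, ← this]
    refine Finset.sum_congr rfl fun e _ => ?_
    change (s (fc R (de e)) + s (fc R (de e).symm)) * _ = _
    simp only [SimpleGraph.Dart.symm_symm]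
    change _ = _ + _ * dl (de e).fst v
    ring
  -- dimension counts
  let Iso := {v : W | ∀ w, ¬ R.G.Adj v w}
  have hiso : ∀ v, v ∉ Iso → ∃ d : R.G.Dart, d.snd = v := by
    intro v hv
    simp only [Iso, Set.mem_ofPred_eq, not_forall, not_not] at hv
    obtain ⟨w, hw⟩ := hv
    exact ⟨⟨(w, v), hw.symm⟩, rfl⟩
  have hniso : ∀ d : R.G.Dart, d.snd ∉ Iso := fun d h => h _ d.adj.symm
  let Ψ : ((LinearMap.ker δ) × (Iso → ZMod 2)) →ₗ[ZMod 2] (W → ZMod 2) :=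
    { toFun := fun p v => if h : v ∈ Iso then p.2 ⟨v, h⟩ else p.1.1 (fc R (hiso v h).choose)
      map_add' := by
        intro z z'
        funext v
        simp only [Pi.add_apply]
        split_ifs <;> simp
      map_smul' := by
        intro c z
        funext v
        simp only [Pi.smul_apply]
        split_ifs <;> simp }
  have hker : ∀ s ∈ LinearMap.ker δ, ∀ d : R.G.Dart, s (fc R d) = s (fc R d.symm) := by
    intro s hs d
    have h1 := congrFun (LinearMap.mem_ker.1 hs) ⟨d.edge, d.edge_mem⟩
    have h2 := CharTwo.add_eq_zero.1 h1
    rcases hde' d with h | h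
    · rw [h]; exact h2
    · rw [h, SimpleGraph.Dart.symm_symm]; exact h2.symm
  have hker2 : ∀ s ∈ LinearMap.ker δ, ∀ d d' : R.G.Dart, d.snd = d'.snd →
      s (fc R d) = s (fc R d') := by
    intro s hs d d' h
    refine rot_reach R (fun c => s (fc R d) = s (fc R c)) (fun c => ?_) (fun c => ?_) d d' h rfl
    · rw [← phi_apply, fc_phi]
    · rw [hker s hs c]
  have hΨ : ∀ p d, Ψ p d.snd = p.1.1 (fc R d) := by
    intro p d
    change (if h : d.snd ∈ Iso then p.2 ⟨d.snd, h⟩ else p.1.1 (fc R (hiso d.snd h).choose)) = _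
    rw [dif_neg (hniso d)]
    exact hker2 _ p.1.2 _ _ (hiso d.snd (hniso d)).choose_spec
  have hΨr : LinearMap.range Ψ ≤ LinearMap.ker B.transpose.mulVecLin := by
    rintro _ ⟨p, rfl⟩
    rw [hBTk]
    intro d
    rw [hΨ, hker _ p.1.2]
    exact hΨ p d.symm
  have hΨi : Function.Injective Ψ := by
    intro p p' h
    refine Prod.ext (Subtype.ext ?_) ?_
    · funext f
      induction f using Quot.ind with
      | mk d =>
        have := congrFun h d.snd
        rwa [hΨ, hΨ] at this
    · funext v
      have := congrFun h v.1
      change (if h : v.1 ∈ Iso then p.2 ⟨v, h⟩ else _) = (if h : v.1 ∈ Iso then p'.2 ⟨v, h⟩ else _) at this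
      rwa [dif_pos v.2, dif_pos v.2] at this
  have d1 : Module.finrank (ZMod 2) (LinearMap.ker δ) + Nat.card Iso ≤
      Module.finrank (ZMod 2) (LinearMap.ker B.transpose.mulVecLin) := by
    have h1 := LinearMap.finrank_range_of_inj hΨi
    have h2 := Submodule.finrank_mono hΨr
    rw [h1, Module.finrank_prod, Module.finrank_fintype_fun_eq_card] at h2
    rwa [Nat.card_eq_fintype_card]
  have d2 : Module.finrank (ZMod 2) (LinearMap.ker B.transpose.mulVecLin) ≤
      Nat.card R.G.ConnectedComponent := by
    let Θ : (R.G.ConnectedComponent → ZMod 2) →ₗ[ZMod 2] (W → ZMod 2) :=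
      LinearMap.funLeft (ZMod 2) (ZMod 2) R.G.connectedComponentMk
    have h1 : LinearMap.ker B.transpose.mulVecLin ≤ LinearMap.range Θ := by
      intro u hu
      rw [hBTk] at hu
      have hw : ∀ {a b : W} (p : R.G.Walk a b), u a = u b := by
        intro a b p
        induction p with
        | nil => rfl
        | cons h p ih => exact (hu ⟨(_, _), h⟩).trans ih
      refine ⟨fun c => SimpleGraph.ConnectedComponent.lift u (fun a b p _ => hw p) c, ?_⟩
      funext v
      rfl
    have h2 := (Submodule.finrank_mono h1).trans (LinearMap.finrank_range_le Θ)
    rwa [Module.finrank_fintype_fun_eq_card, ← Nat.card_eq_fintype_card] at h2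
  have d3 := LinearMap.finrank_range_add_finrank_ker δ
  have d4 := LinearMap.finrank_range_add_finrank_ker B.mulVecLin
  have d5 := LinearMap.finrank_range_add_finrank_ker B.transpose.mulVecLin
  have d6 : Module.finrank (ZMod 2) (LinearMap.range B.transpose.mulVecLin) =
    Module.finrank (ZMod 2) (LinearMap.range B.mulVecLin) := Matrix.rank_transpose B
  have d7 : Nat.card W + Nat.card F + Nat.card Iso =
    Nat.card R.G.edgeSet + 2 * Nat.card R.G.ConnectedComponent := hR
  rw [Module.finrank_fintype_fun_eq_card, ← Nat.card_eq_fintype_card] at d3 d4 d5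
  have heq : LinearMap.range δ = LinearMap.ker B.mulVecLin := by
    apply Submodule.eq_of_le_of_finrank_le hle
    omega
  have hmem : (fun e => w (de e)) ∈ LinearMap.ker B.mulVecLin := by
    rw [LinearMap.mem_ker]
    funext v
    rw [hB, Pi.zero_apply, ← hcyc v, sum_dart_edge R.G de hde]
    refine Finset.sum_congr rfl fun e _ => ?_
    rw [hsym]
    change _ = _ + _ * dl (de e).fst v
    ring
  rw [← heq] at hmem
  obtain ⟨s, hs⟩ := hmem
  refine ⟨s, fun d => ?_⟩
  have h1 : s (fc R (de ⟨d.edge, d.edge_mem⟩)) + s (fc R (de ⟨d.edge, d.edge_mem⟩).symm)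
    = w (de ⟨d.edge, d.edge_mem⟩) := congrFun hs ⟨d.edge, d.edge_mem⟩
  rcases hde' d with h | h
  · rw [h, ← h1, ← h]
  · rw [h, hsym, ← h1, SimpleGraph.Dart.symm_symm, ← SimpleGraph.Dart.symm_symm (de _), ← h]
    simp only [SimpleGraph.Dart.symm_symm]
    exact add_comm _ _

/-! The planar 2-complex: vertices `W ⊕ Sym2 W`, edges `Dart ⊕ Dart` (half-edges, corners). -/

def ca (R : RotationSystem W) : R.G.Dart ⊕ R.G.Dart → W ⊕ Sym2 W
  | .inl d => .inr d.edge
  | .inr d => .inr d.edge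

noncomputable def cb (R : RotationSystem W) : R.G.Dart ⊕ R.G.Dart → W ⊕ Sym2 W
  | .inl d => .inl d.snd
  | .inr d => .inr (R.faceNext d).edge

def cl (R : RotationSystem W) : R.G.Dart ⊕ R.G.Dart →
    Quot (fun a b : R.G.Dart => R.faceNext a = b) ⊕ R.G.Dart
  | .inl d => .inr d
  | .inr d => .inr d

noncomputable def cr (R : RotationSystem W) : R.G.Dart ⊕ R.G.Dart →
    Quot (fun a b : R.G.Dart => R.faceNext a = b) ⊕ R.G.Dart
  | .inl d => .inr ((phi R).symm d.symm)
  | .inr d => .inl (fc R d)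

theorem dl_inl_inr {A B : Type*} (x : A) (y : B) : dl (Sum.inl x : A ⊕ B) (Sum.inr y) = 0 := by
  simp [dl]
theorem dl_inr_inl {A B : Type*} (x : A) (y : B) : dl (Sum.inr y : A ⊕ B) (Sum.inl x) = 0 := by
  simp [dl]
theorem dl_inl {A B : Type*} (x y : A) : dl (Sum.inl x : A ⊕ B) (Sum.inl y) = dl x y := by
  simp [dl]
theorem dl_inr {A B : Type*} (x y : A) : dl (Sum.inr x : B ⊕ A) (Sum.inr y) = dl x y := by
  simp [dl]

theorem sum_vertex (R : RotationSystem W) (z : R.G.Dart ⊕ R.G.Dart → ZMod 2) (v : W) :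
    ∑ y, z y * (dl (ca R y) (.inl v) + dl (cb R y) (.inl v)) =
      ∑ d, z (.inl d) * dl d.snd v := by
  rw [Fintype.sum_sum_type]
  simp [ca, cb, dl_inr_inl, dl_inl]

theorem sum_edge (R : RotationSystem W) (z : R.G.Dart ⊕ R.G.Dart → ZMod 2) (e : Sym2 W) :
    ∑ y, z y * (dl (ca R y) (.inr e) + dl (cb R y) (.inr e)) =
      ∑ d : R.G.Dart, (z (.inl d) + z (.inr d) + z (.inr ((phi R).symm d))) * dl d.edge e := by
  rw [Fintype.sum_sum_type]
  simp only [ca, cb, dl_inl_inr, dl_inr, mul_add, add_zero, add_mul, Finset.sum_add_distrib]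
  rw [← Equiv.sum_comp (phi R) (fun d => z (.inr ((phi R).symm d)) * dl d.edge e)]
  simp only [Equiv.symm_apply_apply]
  simp only [phi_apply, add_assoc]

theorem vperm (R : RotationSystem W) (t : R.G.Dart → ZMod 2) (v : W) :
    ∑ d : R.G.Dart, t ((phi R).symm d.symm) * dl d.snd v = ∑ d, t d * dl d.snd v := by
  rw [← Equiv.sum_comp ((phi R).trans (symmE R.G)) (fun d => t ((phi R).symm d.symm) * dl d.snd v)]
  refine Finset.sum_congr rfl fun d _ => ?_
  rw [Equiv.trans_apply, symmE_apply, SimpleGraph.Dart.symm_symm, Equiv.symm_apply_apply]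
  rfl

theorem M_cx (R : RotationSystem W)
    (s : Quot (fun a b : R.G.Dart => R.faceNext a = b) ⊕ R.G.Dart → ZMod 2) (p : W ⊕ Sym2 W) :
    ∑ y, (s (cl R y) + s (cr R y)) * (dl (ca R y) p + dl (cb R y) p) = 0 := by
  rcases p with v | e
  · rw [sum_vertex R (fun y => s (cl R y) + s (cr R y))]
    simp only [cl, cr, add_mul, Finset.sum_add_distrib]
    rw [vperm R (fun d => s (.inr d))]
    exact zadd _
  · rw [sum_edge R (fun y => s (cl R y) + s (cr R y))]
    simp only [cl, cr]
    have h1 : ∑ d : R.G.Dart, s (.inr ((phi R).symm d.symm)) * dl d.edge e =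
        ∑ d : R.G.Dart, s (.inr ((phi R).symm d)) * dl d.edge e := by
      rw [← Equiv.sum_comp (symmE R.G) (fun d => s (.inr ((phi R).symm d)) * dl d.edge e)]
      refine Finset.sum_congr rfl fun d _ => ?_
      rw [symmE_apply, SimpleGraph.Dart.edge_symm]
    have h2 := zadd (∑ d : R.G.Dart, s (.inr ((phi R).symm d)) * dl d.edge e)
    nth_rw 1 [← h1] at h2
    rw [← Finset.sum_add_distrib] at h2
    rw [← h2]
    refine Finset.sum_congr rfl fun d _ => ?_
    rw [fc_phi_symm]
    linear_combination (dl d.edge e) * (zadd (s (.inr d)) + zadd (s (.inl (fc R d))))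

theorem M_exact (R : RotationSystem W) (hR : R.IsPlane) (z : R.G.Dart ⊕ R.G.Dart → ZMod 2)
    (hz : ∀ p, ∑ y, z y * (dl (ca R y) p + dl (cb R y) p) = 0) :
    ∃ s : Quot (fun a b : R.G.Dart => R.faceNext a = b) ⊕ R.G.Dart → ZMod 2,
      ∀ y, z y = s (cl R y) + s (cr R y) := by
  let w : R.G.Dart → ZMod 2 := fun d => z (.inl d) + z (.inr d) + z (.inr ((phi R).symm d.symm))
  have hsym : ∀ d, w d.symm = w d := by
    intro d
    have h := hz (.inr d.edge)
    rw [sum_edge] at h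
    have h1 : ∑ d' : R.G.Dart, (z (.inl d') + z (.inr d') + z (.inr ((phi R).symm d'))) * dl d'.edge d.edge
        = ∑ d' ∈ {d, d.symm}, (z (.inl d') + z (.inr d') + z (.inr ((phi R).symm d'))) := by
      simp only [dl, mul_ite, mul_one, mul_zero]
      rw [← Finset.sum_filter]
      refine Finset.sum_congr ?_ fun _ _ => rfl
      ext d'
      simp [SimpleGraph.dart_edge_eq_iff d' d]
    rw [h1, Finset.sum_pair (SimpleGraph.Dart.symm_ne _).symm] at h
    refine CharTwo.add_eq_zero.1 ?_
    simp only [w, SimpleGraph.Dart.symm_symm]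
    rw [← h]
    ring
  have hcyc : ∀ v, ∑ d, w d * dl d.snd v = 0 := by
    intro v
    have h := hz (.inl v)
    rw [sum_vertex] at h
    simp only [w, add_mul, Finset.sum_add_distrib]
    rw [vperm R (fun d => z (.inr d)), h, zero_add]
    exact zadd _
  obtain ⟨s, hs⟩ := H_exact R hR w hsym hcyc
  refine ⟨Sum.elim s (fun d => z (.inr d) + s (fc R d)), ?_⟩
  rintro (d | d)
  · have := hs d
    simp only [w] at this
    simp only [cl, cr, Sum.elim_inr]
    rw [fc_phi_symm]
    linear_combination this - zadd (z (.inr d)) - zadd (z (.inr ((phi R).symm d.symm)))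
  · simp only [cl, cr, Sum.elim_inr, Sum.elim_inl]
    linear_combination - zadd (s (fc R d))

end H

section C
variable {W : Type*}

theorem exists_dart (R : RotationSystem W) (e : Sym2 W) (v : W) (h : e ∈ incidentSet R.G v) :
    ∃ d : R.G.Dart, d.edge = e ∧ d.snd = v := by
  obtain ⟨h1, h2⟩ := h
  obtain ⟨u, rfl⟩ := h2
  refine ⟨⟨(u, v), (SimpleGraph.mem_edgeSet _).1 h1 |>.symm⟩, ?_, rfl⟩
  exact Sym2.eq_swap

theorem attached_symm (R : RotationSystem W) {e e' : Sym2 W} (h : Attached R e e') :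
    Attached R e' e := by
  obtain ⟨v, h1, h2, h3⟩ := h
  exact ⟨v, h2, h1, h3.symm⟩

theorem conn_attached [Fintype W] {V : Type*} (R : RotationSystem W) (π : W ⊕ Sym2 W → V)
    {e e' : Sym2 W} (h : Attached R e e') (hp : π (.inr e) = π (.inr e')) :
    Relation.EqvGen (fun u v => ∃ y, π (ca R y) = π (cb R y) ∧ ca R y = u ∧ cb R y = v)
      (.inr e) (.inr e') := by
  obtain ⟨v, h1, h2, h3⟩ := h
  rcases h3 with h3 | h3
  · obtain ⟨d, rfl, rfl⟩ := exists_dart R e v h1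
    have : cb R (.inr d) = .inr e' := by
      simp only [cb]
      rw [faceNext_edge, h3]
    exact .rel _ _ ⟨.inr d, by rw [this]; exact hp, rfl, this⟩
  · obtain ⟨d, rfl, rfl⟩ := exists_dart R e' v h2
    have : cb R (.inr d) = .inr e := by
      simp only [cb]
      rw [faceNext_edge, h3]
    exact .symm _ _ (.rel _ _ ⟨.inr d, by rw [this]; exact hp.symm, rfl, this⟩)

theorem conn_list [Fintype W] {V : Type*} (R : RotationSystem W) (π : W ⊕ Sym2 W → V) (x : V)
    (t : List (Sym2 W)) : ∀ e0, List.IsChain (Attached R) (e0 :: t) →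
      (∀ e ∈ e0 :: t, π (.inr e) = x) → ∀ e ∈ e0 :: t,
    Relation.EqvGen (fun u v => ∃ y, π (ca R y) = π (cb R y) ∧ ca R y = u ∧ cb R y = v)
      (.inr e) (.inr e0) := by
  induction t with
  | nil =>
    intro e0 _ _ e he
    obtain rfl : e = e0 := by simpa using he
    exact .refl _
  | cons b t ih =>
    intro e0 hc hx e he
    rw [List.isChain_cons_cons] at hc
    rcases List.mem_cons.1 he with rfl | he
    · exact .refl _
    · refine .trans _ _ _ (ih b hc.2 (fun e he => hx e (List.mem_cons_of_mem _ he)) e he) ?_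
      refine conn_attached R π (attached_symm R hc.1) ?_
      rw [hx b (by simp), hx e0 (by simp)]

theorem disjoint_bound [Fintype W] {V I : Type*} [Fintype V] [Fintype I] (R : RotationSystem W)
    (hR : R.IsPlane) (τ : V → W) (hτ : Function.Injective τ) (x y : I → V)
    (L : I → List (Sym2 W)) (hL : ∀ i, IsWbwWalkFromTo R (τ (x i)) (τ (y i)) (L i))
    (hne : ∀ i, x i ≠ y i) (hinj : Function.Injective fun i => s(x i, y i))
    (hdis : ∀ i j e, e ∈ L i → e ∈ L j → i = j) :
    Fintype.card I ≤ 3 * Fintype.card V := by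
  rcases isEmpty_or_nonempty I with hI | ⟨⟨i0⟩⟩
  · simp
  let π : W ⊕ Sym2 W → V := Sum.elim
    (fun w => if h : ∃ v, τ v = w then h.choose else x i0)
    (fun e => if h : ∃ i, e ∈ L i then x h.choose else x i0)
  have hπ1 : ∀ v, π (.inl (τ v)) = v := by
    intro v
    have h : ∃ v', τ v' = τ v := ⟨v, rfl⟩
    simp only [π, Sum.elim_inl]
    rw [dif_pos h]
    exact hτ h.choose_spec
  have hπ2 : ∀ i e, e ∈ L i → π (.inr e) = x i := by
    intro i e he
    have h : ∃ i, e ∈ L i := ⟨i, he⟩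
    simp only [π, Sum.elim_inr]
    rw [dif_pos h]
    exact congrArg x (hdis _ _ e h.choose_spec he)
  have hq : ∀ i, ∃ d : R.G.Dart, d.edge ∈ L i ∧ d.snd = τ (y i) := by
    intro i
    obtain ⟨⟨_, _, h3, _⟩, _, e, he, hy⟩ := hL i
    have hm := List.mem_of_getLast? he
    obtain ⟨d, rfl, hd⟩ := exists_dart R e (τ (y i)) ⟨h3 e hm, hy⟩
    exact ⟨d, hm, hd⟩
  choose q hq1 hq2 using hq
  have ea : ∀ i, π (ca R (.inl (q i))) = x i := fun i => hπ2 i _ (hq1 i)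
  have eb : ∀ i, π (cb R (.inl (q i))) = y i := by
    intro i
    change π (.inl (q i).snd) = _
    rw [hq2, hπ1]
  have : Finite (Quot (fun a b : R.G.Dart => R.faceNext a = b)) :=
    Finite.of_surjective (Quot.mk _) Quot.mk_surjective
  have : Fintype (Quot (fun a b : R.G.Dart => R.faceNext a = b)) := Fintype.ofFinite _
  refine minor_bound (ca R) (cb R) (cl R) (cr R) (M_cx R) (M_exact R hR) π (fun v => .inl (τ v))
    (fun i => .inl (q i)) ?_ ?_ ?_ ?_
  · intro i
    rw [ea, eb]
    exact hne i
  · simp only [ea, eb]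
    exact hinj
  · intro i
    rw [ea]
    obtain ⟨⟨_, _, h3, h4⟩, ⟨e, he, hx⟩, _⟩ := hL i
    have hcons : L i = e :: (L i).tail := List.eq_cons_of_mem_head? (by simp [he])
    have hm : e ∈ L i := by rw [hcons]; simp
    refine .trans _ (.inr e) _ ?_ ?_
    · refine conn_list R π (x i) (L i).tail e (by rw [← hcons]; exact h4) ?_ _ ?_
      · rw [← hcons]; exact fun e he => hπ2 i e he
      · rw [← hcons]; exact hq1 i
    · obtain ⟨d, rfl, hd⟩ := exists_dart R e (τ (x i)) ⟨h3 e hm, hx⟩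
      refine .rel _ _ ⟨.inl d, ?_, rfl, ?_⟩
      · change π (.inr d.edge) = π (.inl d.snd)
        rw [hd, hπ1, hπ2 i _ hm]
      · change Sum.inl d.snd = _
        rw [hd]
  · intro i
    rw [eb]
    have : cb R (.inl (q i)) = Sum.inl (τ (y i)) := congrArg Sum.inl (hq2 i)
    rw [this]
    exact .refl _

/-! Balls in the medial graph. -/

noncomputable def nb (R : RotationSystem W) (e : Sym2 W) : Finset (Sym2 W) :=
  {e, R.rot (Quot.out e).1 e, (R.rot (Quot.out e).1).symm e,
    R.rot (Quot.out e).2 e, (R.rot (Quot.out e).2).symm e}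

theorem mem_out (e : Sym2 W) (v : W) (h : v ∈ e) : v = (Quot.out e).1 ∨ v = (Quot.out e).2 := by
  have : e = s((Quot.out e).1, (Quot.out e).2) := (Quot.out_eq e).symm
  rw [this, Sym2.mem_iff] at h
  exact h

theorem nb_card (R : RotationSystem W) (e : Sym2 W) : (nb R e).card ≤ 5 := Finset.card_le_five

theorem mem_nb (R : RotationSystem W) {e e' : Sym2 W} (h : Attached R e e') : e' ∈ nb R e := by
  obtain ⟨v, h1, h2, h3⟩ := h
  have h4 : e' = R.rot v e ∨ e' = (R.rot v).symm e := by
    rcases h3 with h3 | h3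
    · exact Or.inl h3.symm
    · exact Or.inr (by rw [← h3, Equiv.symm_apply_apply])
  simp only [nb, Finset.mem_insert, Finset.mem_singleton]
  rcases mem_out e v h1.2 with h | h <;> rw [h] at h4 <;> tauto

noncomputable def ball (R : RotationSystem W) : ℕ → Sym2 W → Finset (Sym2 W)
  | 0, e => {e}
  | n + 1, e => (ball R n e).biUnion (nb R)

theorem ball_card (R : RotationSystem W) (n : ℕ) (e : Sym2 W) : (ball R n e).card ≤ 5 ^ n := by
  induction n with
  | zero => simp [ball]
  | succ n ih =>
    rw [ball, pow_succ]
    exact (Finset.card_biUnion_le_card_mul _ _ 5 (fun e _ => nb_card R e)).trans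
      (Nat.mul_le_mul_right _ ih)

theorem ball_right (R : RotationSystem W) {n : ℕ} {a b c : Sym2 W} (h1 : b ∈ ball R n a)
    (h2 : c ∈ nb R b) : c ∈ ball R (n + 1) a := by
  rw [ball, Finset.mem_biUnion]
  exact ⟨b, h1, h2⟩

theorem ball_left (R : RotationSystem W) {n : ℕ} : ∀ {a b c : Sym2 W}, b ∈ nb R a →
    c ∈ ball R n b → c ∈ ball R (n + 1) a := by
  induction n with
  | zero =>
    intro a b c h1 h2
    obtain rfl : c = b := by simpa [ball] using h2
    exact ball_right R (by simp [ball]) h1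
  | succ n ih =>
    intro a b c h1 h2
    rw [ball, Finset.mem_biUnion] at h2
    obtain ⟨d, h3, h4⟩ := h2
    exact ball_right R (ih h1 h3) h4

theorem self_nb (R : RotationSystem W) (a : Sym2 W) : a ∈ nb R a := by simp [nb]

theorem ball_mono (R : RotationSystem W) (a : Sym2 W) : Monotone fun n => ball R n a :=
  monotone_nat_of_le_succ fun _ _ h => ball_right R h (self_nb R _)

theorem ball_list (R : RotationSystem W) (L : List (Sym2 W)) (hL : List.IsChain (Attached R) L) :
    ∀ e ∈ L, ∀ e' ∈ L, e' ∈ ball R L.length e := by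
  induction L with
  | nil => simp
  | cons a t ih =>
    intro e he e' he'
    rw [List.length_cons]
    have ih' := ih hL.tail
    rcases List.mem_cons.1 he with rfl | het
    · rcases List.mem_cons.1 he' with rfl | he'
      · exact ball_mono R _ (Nat.zero_le _) (by simp [ball])
      · cases t with
        | nil => simp at he'
        | cons b t =>
          rw [List.isChain_cons_cons] at hL
          exact ball_left R (mem_nb R hL.1) (ih' b (by simp) e' he')
    · rcases List.mem_cons.1 he' with rfl | he'
      · cases t with
        | nil => simp at het
        | cons b t =>
          rw [List.isChain_cons_cons] at hL
          exact ball_right R (ih' e het b (by simp)) (mem_nb R (attached_symm R hL.1))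
      · exact ball_right R (ih' e het e' he') (self_nb R _)

theorem flat_bound [Fintype W] {V I : Type*} [Fintype V] [Fintype I] (R : RotationSystem W)
    (hR : R.IsPlane) (τ : V → W) (hτ : Function.Injective τ) (x y : I → V)
    (L : I → List (Sym2 W)) (hL : ∀ i, IsWbwWalkFromTo R (τ (x i)) (τ (y i)) (L i))
    (hne : ∀ i, x i ≠ y i) (hinj : Function.Injective fun i => s(x i, y i))
    (m : ℕ) (hlen : ∀ i, (L i).length ≤ m) :
    Fintype.card I ≤ 12 * m * 25 ^ m * Fintype.card V := by
  -- walks through a fixed edge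
  have hcount : ∀ e, (Finset.univ.filter fun i => e ∈ L i).card ≤ 4 * 25 ^ m := by
    intro e
    let Bv : Finset W := (ball R m e).biUnion fun e => {(Quot.out e).1, (Quot.out e).2}
    have hBv : Bv.card ≤ 5 ^ m * 2 :=
      (Finset.card_biUnion_le_card_mul _ _ 2 (fun e _ => Finset.card_le_two)).trans
        (Nat.mul_le_mul_right _ (ball_card R m e))
    have hmem : ∀ i, e ∈ L i → ∀ e' ∈ L i, ∀ v ∈ e', v ∈ Bv := by
      intro i he e' he' v hv
      rw [Finset.mem_biUnion]
      refine ⟨e', ball_mono R _ (hlen i) (ball_list R (L i) (hL i).1.2.2.2 e he e' he'), ?_⟩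
      simpa using mem_out e' v hv
    calc (Finset.univ.filter fun i => e ∈ L i).card ≤ (Bv ×ˢ Bv).card := by
          refine Finset.card_le_card_of_injOn (fun i => (τ (x i), τ (y i))) ?_ ?_
          · intro i hi
            have he : e ∈ L i := by simpa using hi
            obtain ⟨_, ⟨e1, h1, h1'⟩, ⟨e2, h2, h2'⟩⟩ := hL i
            simp only [Finset.coe_product, Set.mem_prod, Finset.mem_coe]
            exact ⟨hmem i he e1 (List.mem_of_head? h1) _ h1',
              hmem i he e2 (List.mem_of_getLast? h2) _ h2'⟩
          · intro i _ j _ h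
            simp only [Prod.mk.injEq] at h
            apply hinj
            simp only [hτ h.1, hτ h.2]
      _ ≤ (5 ^ m * 2) * (5 ^ m * 2) := by
          rw [Finset.card_product]
          exact Nat.mul_le_mul hBv hBv
      _ = 4 * 25 ^ m := by
          rw [show (25 : ℕ) = 5 * 5 by norm_num, mul_pow]
          ring
  let good : Finset I → Prop := fun S => ∀ i ∈ S, ∀ j ∈ S, ∀ e, e ∈ L i → e ∈ L j → i = j
  obtain ⟨S, hS, hmax⟩ := Finset.exists_max_image (Finset.univ.filter good) Finset.card
    ⟨∅, by simp [good]⟩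
  have hS' : good S := by simpa using hS
  have hScard : S.card ≤ 3 * Fintype.card V := by
    have := disjoint_bound (I := S) R hR τ hτ (fun i => x i) (fun i => y i) (fun i => L i)
      (fun i => hL i) (fun i => hne i) (fun i j h => Subtype.ext (hinj h))
      (fun i j e h1 h2 => Subtype.ext (hS' i i.2 j j.2 e h1 h2))
    simpa using this
  have hcover : (Finset.univ : Finset I) ⊆ S.biUnion fun j =>
      (L j).toFinset.biUnion fun e => Finset.univ.filter fun i => e ∈ L i := by
    intro i _
    by_contra hcon
    simp only [Finset.mem_biUnion, List.mem_toFinset, Finset.mem_filter, Finset.mem_univ, true_and,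
      not_exists, not_and] at hcon
    have hiS : i ∉ S := by
      intro h
      obtain ⟨e, he⟩ := List.exists_mem_of_ne_nil _ (hL i).1.1
      exact hcon i h e he he
    have hg : good (insert i S) := by
      intro a ha b hb e h1 h2
      rcases Finset.mem_insert.1 ha with rfl | haS
      · rcases Finset.mem_insert.1 hb with rfl | hb
        · rfl
        · exact absurd h1 (hcon b hb e h2)
      · rcases Finset.mem_insert.1 hb with rfl | hb
        · exact absurd h2 (hcon a haS e h1)
        · exact hS' a haS b hb e h1 h2
    have := hmax (insert i S) (by simpa using hg)
    rw [Finset.card_insert_of_notMem hiS] at this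
    omega
  have h1 := Finset.card_le_card hcover
  have h2 : (S.biUnion fun j =>
      (L j).toFinset.biUnion fun e => Finset.univ.filter fun i => e ∈ L i).card ≤
      S.card * (m * (4 * 25 ^ m)) := by
    refine Finset.card_biUnion_le_card_mul _ _ _ fun j _ => ?_
    refine (Finset.card_biUnion_le_card_mul _ _ _ fun e _ => hcount e).trans ?_
    exact Nat.mul_le_mul_right _ ((List.toFinset_card_le _).trans (hlen j))
  rw [Finset.card_univ] at h1
  calc Fintype.card I ≤ S.card * (m * (4 * 25 ^ m)) := h1.trans h2
    _ ≤ (3 * Fintype.card V) * (m * (4 * 25 ^ m)) := Nat.mul_le_mul_right _ hScard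
    _ = _ := by ring

theorem power_walk (R : RotationSystem W) (l : ℕ) (a b : W) (h : (R.power l).Adj a b) :
    ∃ L, L.length ≤ l + 1 ∧ (IsWbwWalkFromTo R a b L ∨ IsWbwWalkFromTo R b a L) := by
  have key : ∀ a b : W, wbwDist R a b ≤ l → ∃ L, L.length ≤ l + 1 ∧ IsWbwWalkFromTo R a b L := by
    intro a b hd
    unfold wbwDist at hd
    have hn : {n : ℕ∞ | ∃ L, IsWbwWalkFromTo R a b L ∧ (L.length : ℕ∞) = n}.Nonempty := by
      by_contra hemp
      rw [Set.not_nonempty_iff_eq_empty] at hemp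
      rw [hemp, sInf_empty] at hd
      exact absurd hd (by simp)
    obtain ⟨L, h1, h2⟩ := csInf_mem hn
    rw [← h2] at hd
    have := Nat.cast_le.1 hd
    exact ⟨L, by omega, h1⟩
  rcases h with h | ⟨_, h | h⟩
  · refine ⟨[s(a, b)], by simp, Or.inl ⟨⟨by simp, by simp, by simpa using h, ?_⟩, ?_, ?_⟩⟩
    · exact List.isChain_singleton _
    · exact ⟨_, rfl, by simp⟩
    · exact ⟨_, rfl, by simp⟩
  · obtain ⟨L, h1, h2⟩ := key _ _ h
    exact ⟨L, h1, Or.inl h2⟩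
  · obtain ⟨L, h1, h2⟩ := key _ _ h
    exact ⟨L, h1, Or.inr h2⟩

theorem pow_primrec (c : ℕ) : Primrec fun n : ℕ => c ^ n := by
  have h : Primrec fun n : ℕ => (Nat.rec 1 (fun _ y => y * c) n : ℕ) :=
    Primrec.nat_rec₁ 1 (Primrec.nat_mul.comp Primrec.snd (Primrec.const c)).to₂
  refine h.of_eq fun n => ?_
  induction n with
  | zero => rfl
  | succ n ih =>
    rw [pow_succ, ← ih]

end C
end WBWProof

/-- Corollary 1: there is a recursive function `f` such that every
`λ`-flat graph on `n` vertices has at most `f(λ) · n` edges. -/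
theorem flat_sparse :
    ∃ f : ℕ → ℕ, Computable f ∧
      ∀ (V : Type) (G : SimpleGraph V), Finite V → ∀ l : ℕ,
        WBW.IsFlat l G → Nat.card G.edgeSet ≤ f l * Nat.card V := by
  classical
  refine ⟨fun l => 12 * (l + 1) * 25 ^ (l + 1), ?_, ?_⟩
  · apply Primrec.to_comp
    have h := Primrec.succ
    exact Primrec.nat_mul.comp (Primrec.nat_mul.comp (Primrec.const 12) h)
      ((WBWProof.pow_primrec 25).comp h)
  · intro V G hV l ⟨W, hW, R, τ, hR, hτ, hadj⟩
    have := Fintype.ofFinite V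
    have := Fintype.ofFinite W
    have h : ∀ e : G.edgeSet, ∃ (x y : V) (L : List (Sym2 W)), s(x, y) = e.1 ∧ x ≠ y ∧
        L.length ≤ l + 1 ∧ WBW.IsWbwWalkFromTo R (τ x) (τ y) L := by
      rintro ⟨e, he⟩
      induction e with
      | h a b =>
        have hab : G.Adj a b := he
        obtain ⟨L, h1, h2 | h2⟩ := WBWProof.power_walk R l _ _ (hadj a b hab)
        · exact ⟨a, b, L, rfl, hab.ne, h1, h2⟩
        · exact ⟨b, a, L, Sym2.eq_swap, hab.ne', h1, h2⟩
    choose x y L h1 h2 h3 h4 using h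
    have := WBWProof.flat_bound R hR τ hτ x y L h4 h2
      (fun i j h => Subtype.ext (by rw [← h1 i, ← h1 j]; exact h)) (l + 1) h3
    rwa [Nat.card_eq_fintype_card, Nat.card_eq_fintype_card]
end
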